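/- Under Condition (★), for every integer h ≥ 2, ∑_{m ∈ 𝒩_h(x)} ω(m) = κ·γ_h·x^{1/h}·log log x + κ·γ_h·𝔇₁·x^{1/h} + O_h(x^{1/h}/log x) as x → ∞, where the implied constant depends only on h and on the data P, N, κ, θ. -/

import Mathlib

open Filter Topology Asymptotics
open scoped Classical

noncomputable section

/-- The norm on the free abelian monoid `P →₀ ℕ`, extended multiplicatively
from the norm `N` on the prime elements. -/
def Nm {P : Type*} (N : P → ℕ) (m : P →₀ ℕ) : ℕ :=
  m.prod fun p k => N p ^ k

/-- The number of distinct prime elements generating `m`. -/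
def omegaM {P : Type*} (m : P →₀ ℕ) : ℕ := m.support.card

/-- `m` is `h`-free: every multiplicity is at most `h - 1`. -/
def HFree {P : Type*} (h : ℕ) (m : P →₀ ℕ) : Prop := ∀ p, m p ≤ h - 1

/-- `m` is `h`-full: every nonzero multiplicity is at least `h`. -/
def HFull {P : Type*} (h : ℕ) (m : P →₀ ℕ) : Prop := ∀ p, m p = 0 ∨ h ≤ m p

/-- Condition (★): `#{m : N(m) ≤ x} = κ·x + O(x^θ)` with `κ > 0`, `0 ≤ θ < 1`. -/
def StarCond {P : Type*} (N : P → ℕ) (κ θ : ℝ) : Prop :=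
  0 < κ ∧ 0 ≤ θ ∧ θ < 1 ∧
    (fun x : ℝ => (({m : P →₀ ℕ | (Nm N m : ℝ) ≤ x}.ncard : ℝ) - κ * x))
      =O[atTop] fun x : ℝ => x ^ θ

/-- The generalized zeta function `ζ_M(s) = ∑_m N(m)^{-s}`. -/
def zetaM {P : Type*} (N : P → ℕ) (s : ℝ) : ℝ :=
  ∑' m : P →₀ ℕ, 1 / (Nm N m : ℝ) ^ s

/-- The constant `γ_h`. -/
def gammah {P : Type*} (N : P → ℕ) (h : ℕ) : ℝ :=
  ∏' p : P, (1 + ((N p : ℝ) - (N p : ℝ) ^ (1 / (h : ℝ))) /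
    ((N p : ℝ) ^ 2 * ((N p : ℝ) ^ (1 / (h : ℝ)) - 1)))

/-- `A` is the Mertens constant `𝔄` of the prime system:
`𝔄 = lim (∑_{N(p) ≤ x} 1/N(p) − log log x)`. -/
def IsMertens {P : Type*} (N : P → ℕ) (A : ℝ) : Prop :=
  Tendsto (fun x : ℝ =>
      (∑ᶠ p ∈ {p : P | (N p : ℝ) ≤ x}, 1 / (N p : ℝ)) - Real.log (Real.log x))
    atTop (𝓝 A)

/-- The constant `𝔅 = -π²/6`. -/
def Bconst : ℝ := -(Real.pi ^ 2) / 6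

/-- The constant `ℭ₁`, given the Mertens constant `A`. -/
def C1const {P : Type*} (N : P → ℕ) (h : ℕ) (A : ℝ) : ℝ :=
  A - ∑' p : P, ((N p : ℝ) - 1) / ((N p : ℝ) * ((N p : ℝ) ^ h - 1))

/-- The constant `ℭ₂`, given the Mertens constant `A`. -/
def C2const {P : Type*} (N : P → ℕ) (h : ℕ) (A : ℝ) : ℝ :=
  C1const N h A ^ 2 + C1const N h A + Bconst -
    ∑' p : P, (((N p : ℝ) ^ (h - 1) - 1) / ((N p : ℝ) ^ h - 1)) ^ 2

/-- The convergent series `𝔏_h(r)`. -/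
def LhSum {P : Type*} (N : P → ℕ) (h : ℕ) (r : ℝ) : ℝ :=
  ∑' p : P, 1 / ((N p : ℝ) ^ (r / (h : ℝ) - 1) *
    ((N p : ℝ) - (N p : ℝ) ^ (1 - 1 / (h : ℝ)) + 1))

/-- The constant `𝔇₁`, given the Mertens constant `A`. -/
def D1const {P : Type*} (N : P → ℕ) (h : ℕ) (A : ℝ) : ℝ :=
  A - Real.log (h : ℝ) + LhSum N h ((h : ℝ) + 1) - LhSum N h (2 * (h : ℝ))

/-- The constant `𝔇₂`, given the Mertens constant `A`. -/
def D2const {P : Type*} (N : P → ℕ) (h : ℕ) (A : ℝ) : ℝ :=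
  D1const N h A ^ 2 + D1const N h A + Bconst -
    ∑' p : P, (1 / ((N p : ℝ) - (N p : ℝ) ^ (1 - 1 / (h : ℝ)) + 1)) ^ 2

/-- The error term `R_{S_h}(x)` for `h`-free counts. -/
def RSfree (h : ℕ) (θ : ℝ) (x : ℝ) : ℝ :=
  if 1 / (h : ℝ) < θ then x ^ θ
  else if 1 / (h : ℝ) = θ then x ^ (1 / (h : ℝ)) * Real.log x
  else x ^ (1 / (h : ℝ))

/-- The error term `R_{N_h}(x)` for `h`-full counts. -/
def RNfull (h : ℕ) (θ : ℝ) (x : ℝ) : ℝ :=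
  if (h : ℝ) / ((h : ℝ) + 1) < θ then x ^ (θ / (h : ℝ))
  else if ∃ i : ℕ, 1 ≤ i ∧ i ≤ h - 1 ∧ θ = (h : ℝ) / ((h : ℝ) + (i : ℝ)) then
    x ^ (1 / ((h : ℝ) + 1)) * Real.log x
  else x ^ (1 / ((h : ℝ) + 1))

section PartP1
lemma dom_sum {ι : Type*} (s : Finset ι) (ν : ι → ℕ) (c : ι → ℝ) (C : ℝ)
    (hν1 : ∀ i ∈ s, 1 ≤ ν i)
    (hc : ∀ k : ℕ, ∑ i ∈ s with ν i ≤ k, c i ≤ C * k) (w : ℕ → ℝ)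
    (hw : ∀ n, 1 ≤ n → w (n + 1) ≤ w n) (hw0 : ∀ n, 0 ≤ w n) (M : ℕ)
    (hM : ∀ i ∈ s, ν i ≤ M) :
    ∑ i ∈ s, c i * w (ν i) ≤ C * ∑ n ∈ Finset.Icc 1 M, w n := by
  have key : ∀ M : ℕ, ∑ i ∈ s with ν i ≤ M, c i * w (ν i)
      + (C * M - ∑ i ∈ s with ν i ≤ M, c i) * w M ≤ C * ∑ n ∈ Finset.Icc 1 M, w n := by
    intro M
    induction M with
    | zero =>
      have : s.filter (fun i => ν i ≤ 0) = ∅ := by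
        apply Finset.filter_eq_empty_iff.2
        intro i hi
        have := hν1 i hi
        omega
      rw [this]; simp
    | succ M ih =>
      have hsplit : ∀ f : ι → ℝ, ∑ i ∈ s with ν i ≤ M + 1, f i
          = ∑ i ∈ s with ν i ≤ M, f i + ∑ i ∈ s with ν i = M + 1, f i := by
        intro f
        rw [← Finset.sum_union]
        · congr 1
          ext i
          simp only [Finset.mem_filter, Finset.mem_union]
          constructor
          · rintro ⟨h1, h2⟩
            rcases Nat.le_or_eq_of_le_succ h2 with h | h
            · exact Or.inl ⟨h1, h⟩
            · exact Or.inr ⟨h1, h⟩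
          · rintro (⟨h1, h2⟩ | ⟨h1, h2⟩)
            · exact ⟨h1, by omega⟩
            · exact ⟨h1, by omega⟩
        · rw [Finset.disjoint_filter]
          intro i _ h1 h2
          omega
      have h2 : ∑ i ∈ s with ν i = M + 1, c i * w (ν i)
          = (∑ i ∈ s with ν i = M + 1, c i) * w (M + 1) := by
        rw [Finset.sum_mul]
        apply Finset.sum_congr rfl
        intro i hi
        rw [(Finset.mem_filter.1 hi).2]
      rw [hsplit, hsplit, h2, Finset.sum_Icc_succ_top (by omega)]
      have h3 : (C * M - ∑ i ∈ s with ν i ≤ M, c i) * w (M + 1)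
          ≤ (C * M - ∑ i ∈ s with ν i ≤ M, c i) * w M := by
        rcases Nat.eq_zero_or_pos M with h0 | h0
        · subst h0
          have : s.filter (fun i => ν i ≤ 0) = ∅ := by
            apply Finset.filter_eq_empty_iff.2
            intro i hi
            have := hν1 i hi
            omega
          rw [this]; simp
        · apply mul_le_mul_of_nonneg_left (hw M h0)
          linarith [hc M]
      push_cast
      nlinarith [ih, h3]
  have hall : s.filter (fun i => ν i ≤ M) = s := Finset.filter_true_of_mem hM
  have := key M
  rw [hall] at this
  have h4 := hc M
  rw [hall] at h4
  have : 0 ≤ (C * M - ∑ i ∈ s, c i) * w M := mul_nonneg (by linarith) (hw0 M)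
  linarith

lemma bern (n : ℕ) {p : ℝ} (hp0 : 0 ≤ p) (hp1 : p ≤ 1) :
    (n : ℝ) ^ p ≤ ((n : ℝ) + 1) ^ p * (1 - p / ((n : ℝ) + 1)) := by
  have hn : (0 : ℝ) < (n : ℝ) + 1 := by positivity
  have h1 : (n : ℝ) = ((n : ℝ) + 1) * (1 + (-(1 / ((n : ℝ) + 1)))) := by field_simp; ring
  have h3 : 1 / ((n : ℝ) + 1) ≤ 1 := by
    rw [div_le_one hn]; linarith [(Nat.cast_nonneg n : (0 : ℝ) ≤ n)]
  have h2 := rpow_one_add_le_one_add_mul_self (s := -(1 / ((n : ℝ) + 1))) (by linarith) hp0 hp1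
  calc (n : ℝ) ^ p = (((n : ℝ) + 1) * (1 + (-(1 / ((n : ℝ) + 1))))) ^ p := by rw [← h1]
    _ = ((n : ℝ) + 1) ^ p * (1 + (-(1 / ((n : ℝ) + 1)))) ^ p :=
        Real.mul_rpow hn.le (by linarith)
    _ ≤ ((n : ℝ) + 1) ^ p * (1 + p * (-(1 / ((n : ℝ) + 1)))) := by gcongr
    _ = _ := by ring

lemma sum_rpow_le {s : ℝ} (hs0 : 0 ≤ s) (hs1 : s < 1) (M : ℕ) :
    ∑ n ∈ Finset.Icc 1 M, (n : ℝ) ^ (-s) ≤ (M : ℝ) ^ (1 - s) / (1 - s) := by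
  have hs : 0 < 1 - s := by linarith
  induction M with
  | zero => simp [Real.zero_rpow hs.ne']
  | succ M ih =>
    rw [Finset.sum_Icc_succ_top (by omega)]
    have h := bern M (p := 1 - s) hs.le (by linarith)
    have hM : (0 : ℝ) < (M : ℝ) + 1 := by positivity
    have e : ((M : ℝ) + 1) ^ (-s) = ((M : ℝ) + 1) ^ (1 - s) / ((M : ℝ) + 1) := by
      rw [← Real.rpow_sub_one hM.ne']; congr 1; ring
    push_cast
    rw [e]
    refine (add_le_add_left ih _).trans ?_
    rw [div_add' _ _ _ hs.ne', div_le_div_iff_of_pos_right hs]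
    calc _ ≤ ((M : ℝ) + 1) ^ (1 - s) * (1 - (1 - s) / ((M : ℝ) + 1))
          + ((M : ℝ) + 1) ^ (1 - s) / ((M : ℝ) + 1) * (1 - s) := by gcongr
      _ = _ := by field_simp; ring

/-- telescoping limit -/
lemma tele_lim (v t : ℕ → ℝ) (K : ℝ) (ht : Tendsto t atTop (𝓝 0))
    (hv : ∀ n, 1 ≤ n → |v (n + 1) - v n| ≤ K * (t n - t (n + 1))) :
    ∃ c, ∀ n, 1 ≤ n → |v n - c| ≤ K * t n := by
  have h1 : ∀ n, 1 ≤ n → ∀ k, |v (n + k) - v n| ≤ K * (t n - t (n + k)) := by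
    intro n hn k
    induction k with
    | zero => simp
    | succ k ih =>
      have := hv (n + k) (by omega)
      rw [← add_assoc]
      have h3 := abs_add_le (v (n + k + 1) - v (n + k)) (v (n + k) - v n)
      rw [sub_add_sub_cancel] at h3
      linarith
  have hKt : Tendsto (fun n => K * t n) atTop (𝓝 0) := by simpa using ht.const_mul K
  have hc : CauchySeq v := by
    rw [Metric.cauchySeq_iff']
    intro ε hε
    have := (Metric.tendsto_atTop.1 hKt) (ε / 2) (by linarith)
    obtain ⟨n0, hn0⟩ := this
    refine ⟨max n0 1, fun n hn => ?_⟩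
    obtain ⟨k, rfl⟩ := Nat.exists_eq_add_of_le hn
    have ha := hn0 (max n0 1) (le_max_left _ _)
    have hb := hn0 (max n0 1 + k) (by omega)
    rw [Real.dist_eq, sub_zero] at ha hb
    rw [Real.dist_eq]
    have := h1 (max n0 1) (le_max_right _ _) k
    have := (abs_lt.1 ha).2
    have := (abs_lt.1 hb).1
    linarith
  obtain ⟨c, hcl⟩ := cauchySeq_tendsto_of_complete hc
  refine ⟨c, fun n hn => ?_⟩
  have l1 : Tendsto (fun k => |v (n + k) - v n|) atTop (𝓝 |c - v n|) := by
    have : Tendsto (fun k => v (n + k)) atTop (𝓝 c) := by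
      simpa [add_comm] using (tendsto_add_atTop_iff_nat n).2 hcl
    exact (this.sub_const _).abs
  have l2 : Tendsto (fun k => K * (t n - t (n + k))) atTop (𝓝 (K * (t n - 0))) := by
    have : Tendsto (fun k => t (n + k)) atTop (𝓝 0) := by
      simpa [add_comm] using (tendsto_add_atTop_iff_nat n).2 ht
    exact (this.const_sub _).const_mul _
  have := le_of_tendsto_of_tendsto' l1 l2 (h1 n hn)
  rw [abs_sub_comm]
  simpa using this

lemma abel_log (e : ℕ → ℝ) (C α : ℝ) (hα : 0 ≤ α)  (hC : 0 ≤ C)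
    (hE : ∀ n : ℕ, 1 ≤ n → |∑ k ∈ Finset.Icc 1 n, e k| ≤ C * (n : ℝ) ^ α) (M : ℕ) (hM : 1 ≤ M) :
    |∑ k ∈ Finset.Icc 1 M, e k * Real.log k| ≤ 2 * C * (M : ℝ) ^ α * Real.log M := by
  have key : ∀ n : ℕ, 1 ≤ n → |∑ k ∈ Finset.Icc 1 n, e k * Real.log k
      - (∑ k ∈ Finset.Icc 1 n, e k) * Real.log n| ≤ C * (n : ℝ) ^ α * Real.log n := by
    intro n hn
    induction n, hn using Nat.le_induction with
    | base => simp
    | succ n hn ih =>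
      rw [Finset.sum_Icc_succ_top (by omega), Finset.sum_Icc_succ_top (by omega)]
      have hn0 : (0 : ℝ) < n := by exact_mod_cast hn
      have hlog : Real.log n ≤ Real.log ((n + 1 : ℕ) : ℝ) :=
        Real.log_le_log hn0 (by push_cast; linarith)
      have hlog0 : 0 ≤ Real.log n := Real.log_nonneg (by exact_mod_cast hn)
      have hp : (n : ℝ) ^ α ≤ ((n + 1 : ℕ) : ℝ) ^ α := by
        gcongr; push_cast; linarith
      set E := ∑ k ∈ Finset.Icc 1 n, e k
      set F := ∑ k ∈ Finset.Icc 1 n, e k * Real.log k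
      have e1 : F + e (n + 1) * Real.log ((n + 1 : ℕ) : ℝ) - (E + e (n + 1)) * Real.log ((n + 1 : ℕ) : ℝ)
        = (F - E * Real.log n) + (- (E * (Real.log ((n + 1 : ℕ) : ℝ) - Real.log n))) := by ring
      rw [e1]
      refine (abs_add_le _ _).trans ?_
      rw [abs_neg, abs_mul, abs_of_nonneg (sub_nonneg.2 hlog)]
      have := mul_le_mul_of_nonneg_right (hE n hn) (sub_nonneg.2 hlog)
      calc _ ≤ C * (n : ℝ) ^ α * Real.log n + C * (n : ℝ) ^ α * (Real.log ((n + 1 : ℕ) : ℝ) - Real.log n) :=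
            add_le_add ih this
        _ = C * (n : ℝ) ^ α * Real.log ((n + 1 : ℕ) : ℝ) := by ring
        _ ≤ _ := by
          gcongr
  have h1 := key M hM
  have hl : 0 ≤ Real.log M := Real.log_nonneg (by exact_mod_cast hM)
  have h2 := mul_le_mul_of_nonneg_right (hE M hM) hl
  rw [← abs_of_nonneg hl, ← abs_mul, abs_of_nonneg hl] at h2
  have := abs_add_le (∑ k ∈ Finset.Icc 1 M, e k * Real.log k
      - (∑ k ∈ Finset.Icc 1 M, e k) * Real.log M) ((∑ k ∈ Finset.Icc 1 M, e k) * Real.log M)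
  rw [sub_add_cancel] at this
  linarith

lemma abel_inv (e : ℕ → ℝ) (C α : ℝ) (hα : 0 ≤ α) (hα1 : α < 1) (hC : 0 ≤ C)
    (hE : ∀ n : ℕ, 1 ≤ n → |∑ k ∈ Finset.Icc 1 n, e k| ≤ C * (n : ℝ) ^ α) :
    ∃ c K : ℝ, 0 ≤ K ∧ ∀ M : ℕ, 1 ≤ M →
      |∑ k ∈ Finset.Icc 1 M, e k / k - c| ≤ K * (M : ℝ) ^ (α - 1) := by
  have h1α : 0 < 1 - α := by linarith
  obtain ⟨c, hc⟩ := tele_lim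
    (fun n => ∑ k ∈ Finset.Icc 1 n, e k / k - (∑ k ∈ Finset.Icc 1 n, e k) / n)
    (fun n => (n : ℝ) ^ (α - 1)) (C / (1 - α)) (by
      have := (tendsto_rpow_neg_atTop h1α).comp (tendsto_natCast_atTop_atTop (R := ℝ))
      simpa [Function.comp_def] using this) (by
      intro n hn
      have hn0 : (0 : ℝ) < n := by exact_mod_cast hn
      have hn1 : (0 : ℝ) < (n : ℝ) + 1 := by linarith
      rw [Finset.sum_Icc_succ_top (by omega), Finset.sum_Icc_succ_top (by omega)]
      have hEn := hE n hn
      set E := ∑ k ∈ Finset.Icc 1 n, e k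
      set F := ∑ k ∈ Finset.Icc 1 n, e k / k
      have e1 : F + e (n + 1) / ((n + 1 : ℕ) : ℝ) - (E + e (n + 1)) / ((n + 1 : ℕ) : ℝ) - (F - E / n)
          = E / (n * (n + 1)) := by
        push_cast; field_simp; ring
      rw [e1, abs_div, abs_of_pos (by positivity : (0 : ℝ) < n * (n + 1))]
      have hb := bern n (p := 1 - α) h1α.le (by linarith)
      have ha : 0 < (n : ℝ) ^ (1 - α) := by positivity
      have hb' : 0 < ((n : ℝ) + 1) ^ (1 - α) := by positivity
      have e2 : (n : ℝ) ^ (α - 1) = ((n : ℝ) ^ (1 - α))⁻¹ := by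
        rw [← Real.rpow_neg hn0.le]; congr 1; ring
      have e3 : ((n : ℝ) + 1) ^ (α - 1) = (((n : ℝ) + 1) ^ (1 - α))⁻¹ := by
        rw [← Real.rpow_neg hn1.le]; congr 1; ring
      have e4 : (n : ℝ) ^ α = n * (n : ℝ) ^ (α - 1) := by
        rw [Real.rpow_sub_one hn0.ne']; field_simp
      have hmain : (n : ℝ) ^ (α - 1) / (n + 1) * (1 - α) ≤ (n : ℝ) ^ (α - 1) - ((n : ℝ) + 1) ^ (α - 1) := by
        rw [e2, e3]
        set A := (n : ℝ) ^ (1 - α)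
        set B := ((n : ℝ) + 1) ^ (1 - α)
        have : A⁻¹ - B⁻¹ - A⁻¹ / (n + 1) * (1 - α) = (B * (1 - (1 - α) / (n + 1)) - A) / (A * B) := by
          field_simp
          ring
        have : 0 ≤ A⁻¹ - B⁻¹ - A⁻¹ / (n + 1) * (1 - α) := by
          rw [this]; apply div_nonneg (by linarith) (by positivity)
        linarith
      push_cast
      calc |E| / (n * (n + 1)) ≤ C * (n : ℝ) ^ α / (n * (n + 1)) := by gcongr
        _ = C / (1 - α) * ((n : ℝ) ^ (α - 1) / (n + 1) * (1 - α)) := by rw [e4]; field_simp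
        _ ≤ _ := by gcongr)
  refine ⟨c, C / (1 - α) + C, by positivity, fun M hM => ?_⟩
  have hM0 : (0 : ℝ) < M := by exact_mod_cast hM
  have h1 := hc M hM
  have h2 : |(∑ k ∈ Finset.Icc 1 M, e k) / M| ≤ C * (M : ℝ) ^ (α - 1) := by
    rw [abs_div, abs_of_pos hM0, Real.rpow_sub_one hM0.ne', ← mul_div_assoc]
    gcongr
    exact hE M hM
  have h3 := abs_add_le (∑ k ∈ Finset.Icc 1 M, e k / k - (∑ k ∈ Finset.Icc 1 M, e k) / M - c)
    ((∑ k ∈ Finset.Icc 1 M, e k) / M)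
  have e5 : ∑ k ∈ Finset.Icc 1 M, e k / k - (∑ k ∈ Finset.Icc 1 M, e k) / M - c +
    ((∑ k ∈ Finset.Icc 1 M, e k) / M) = ∑ k ∈ Finset.Icc 1 M, e k / k - c := by ring
  rw [e5] at h3
  linarith

lemma log_sum (M : ℕ) (hM : 1 ≤ M) :
    |∑ k ∈ Finset.Icc 1 M, Real.log k - (M * Real.log M - M)| ≤ Real.log M + 1 := by
  induction M, hM using Nat.le_induction with
  | base => simp
  | succ n hn ih =>
    rw [Finset.sum_Icc_succ_top (by omega)]
    have hn0 : (0 : ℝ) < n := by exact_mod_cast hn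
    -- (n) (log(n+1) - log n) in [1 - 1/(n+1), 1]
    have h1 : Real.log ((n + 1 : ℕ) : ℝ) - Real.log n ≤ 1 / n := by
      rw [← Real.log_div (by positivity) (by positivity)]
      refine (Real.log_le_sub_one_of_pos (by positivity)).trans (le_of_eq ?_)
      push_cast; field_simp; ring
    have h2 : 1 / ((n : ℝ) + 1) ≤ Real.log ((n + 1 : ℕ) : ℝ) - Real.log n := by
      rw [← Real.log_div (by positivity) (by positivity)]
      refine le_trans (le_of_eq ?_) (Real.one_sub_inv_le_log_of_pos (by positivity))
      push_cast; field_simp; ring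
    set l := Real.log n
    set l' := Real.log ((n + 1 : ℕ) : ℝ)
    have h3 : n * (l' - l) ≤ 1 := by
      calc n * (l' - l) ≤ n * (1 / n) := by gcongr
        _ = 1 := by field_simp
    have h4 : 1 ≤ ((n : ℝ) + 1) * (l' - l) := by
      calc 1 = ((n : ℝ) + 1) * (1 / ((n : ℝ) + 1)) := by field_simp
        _ ≤ _ := by gcongr
    push_cast
    rw [abs_le] at ih ⊢
    constructor
    · nlinarith [ih.1]
    · nlinarith [ih.2]

lemma harm_sum (M : ℕ) (hM : 1 ≤ M) :
    |∑ k ∈ Finset.Icc 1 M, 1 / (k : ℝ) - (Real.log M + Real.eulerMascheroniConstant)| ≤ 1 / M := by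
  have h1 := Real.eulerMascheroniSeq_lt_eulerMascheroniConstant M
  have h2 := Real.eulerMascheroniConstant_lt_eulerMascheroniSeq' M
  have hM0 : (0 : ℝ) < M := by exact_mod_cast hM
  have e : ((harmonic M : ℚ) : ℝ) = ∑ k ∈ Finset.Icc 1 M, 1 / (k : ℝ) := by
    rw [harmonic_eq_sum_Icc]; push_cast; simp
  rw [Real.eulerMascheroniSeq, e] at h1
  rw [Real.eulerMascheroniSeq', if_neg (by omega), e] at h2
  have h3 : Real.log ((M : ℝ) + 1) - Real.log M ≤ 1 / M := by
    rw [← Real.log_div (by positivity) (by positivity)]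
    refine (Real.log_le_sub_one_of_pos (by positivity)).trans (le_of_eq ?_)
    field_simp; ring
  rw [abs_le]
  constructor <;> linarith

end PartP1

section PartP2
lemma G_est (a : ℕ → ℝ) (κ C α : ℝ) (hα : 0 ≤ α) (hα1 : α < 1) (hC : 0 ≤ C)
    (hA : ∀ n : ℕ, 1 ≤ n → |∑ k ∈ Finset.Icc 1 n, a k - κ * n| ≤ C * (n : ℝ) ^ α) :
    ∃ c0 K β : ℝ, 0 ≤ K ∧ α ≤ β ∧ 0 ≤ β ∧ β < 1 ∧ ∀ y : ℝ, 1 ≤ y →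
      |∑ k ∈ Finset.Icc 1 ⌊y⌋₊, a k * (Real.log k - y / k + 1) - c0 * y| ≤ K * y ^ β := by
  have hE : ∀ n : ℕ, 1 ≤ n → |∑ k ∈ Finset.Icc 1 n, (a k - κ)| ≤ C * (n : ℝ) ^ α := by
    intro n hn
    have := hA n hn
    rw [Finset.sum_sub_distrib, Finset.sum_const, Nat.card_Icc]
    simpa [mul_comm] using this
  obtain ⟨c, K1, hK1, hc⟩ := abel_inv _ C α hα hα1 hC hE
  have hlogE := abel_log _ C α hα hC hE
  set β := (1 + α) / 2 with hβ
  have hβα : 0 < β - α := by rw [hβ]; linarith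
  have hβ0 : 0 < β := by linarith
  refine ⟨-(c + κ * Real.eulerMascheroniConstant),
    2 * C / (β - α) + 2 * K1 + C + |κ| * (2 / β + 3), β, by positivity, by linarith, by linarith, by
      rw [hβ]; linarith, ?_⟩
  intro y hy
  have hy0 : 0 < y := by linarith
  set M := ⌊y⌋₊ with hMdef
  have hM : 1 ≤ M := Nat.le_floor (by simpa using hy)
  have hM0 : (0 : ℝ) < M := by exact_mod_cast hM
  have hM1 : (1 : ℝ) ≤ M := by exact_mod_cast hM
  have hMy : (M : ℝ) ≤ y := Nat.floor_le hy0.le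
  have hyM : y < M + 1 := Nat.lt_floor_add_one y
  have hyb : 1 ≤ y ^ β := Real.one_le_rpow hy hβ0.le
  have hl0 : 0 ≤ Real.log M := Real.log_nonneg hM1
  have hlM : Real.log M ≤ Real.log y := Real.log_le_log hM0 hMy
  have hly : Real.log y ≤ y ^ β / β := Real.log_le_rpow_div hy0.le hβ0
  have hly2 : Real.log y ≤ y ^ (β - α) / (β - α) := Real.log_le_rpow_div hy0.le hβα
  have hMa : (M : ℝ) ^ α ≤ y ^ α := by gcongr
  have hab : y ^ α ≤ y ^ β := Real.rpow_le_rpow_of_exponent_le hy (by linarith)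
  have t1 : |∑ k ∈ Finset.Icc 1 M, (a k - κ) * Real.log k| ≤ 2 * C / (β - α) * y ^ β := by
    refine (hlogE M hM).trans ?_
    calc 2 * C * (M : ℝ) ^ α * Real.log M ≤ 2 * C * y ^ α * (y ^ (β - α) / (β - α)) := by
          gcongr; linarith
      _ = 2 * C / (β - α) * (y ^ α * y ^ (β - α)) := by ring
      _ = _ := by rw [← Real.rpow_add hy0]; ring_nf
  have t2 : |y * (∑ k ∈ Finset.Icc 1 M, (a k - κ) / k - c)| ≤ 2 * K1 * y ^ β := by
    rw [abs_mul, abs_of_pos hy0]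
    calc y * _ ≤ y * (K1 * (M : ℝ) ^ (α - 1)) := by gcongr; exact hc M hM
      _ ≤ (2 * M) * (K1 * (M : ℝ) ^ (α - 1)) := by gcongr; linarith
      _ = 2 * K1 * (M : ℝ) ^ α := by rw [Real.rpow_sub_one hM0.ne']; field_simp
      _ ≤ _ := by gcongr; linarith
  have t3 : |∑ k ∈ Finset.Icc 1 M, (a k - κ)| ≤ C * y ^ β := by
    refine (hE M hM).trans ?_
    gcongr; linarith
  have t4 : |∑ k ∈ Finset.Icc 1 M, Real.log k - (M * Real.log M - M)| ≤ y ^ β / β + 1 := by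
    have := log_sum M hM
    linarith
  have t5 : |y * (∑ k ∈ Finset.Icc 1 M, 1 / (k : ℝ) - (Real.log M + Real.eulerMascheroniConstant))| ≤ 2 := by
    rw [abs_mul, abs_of_pos hy0]
    calc y * _ ≤ y * (1 / M) := by gcongr; exact harm_sum M hM
      _ ≤ (2 * M) * (1 / M) := by gcongr; linarith
      _ = 2 := by field_simp
  have t6 : |((M : ℝ) - y) * Real.log M| ≤ y ^ β / β := by
    rw [abs_mul, abs_of_nonneg hl0]
    have : |(M : ℝ) - y| ≤ 1 := by rw [abs_le]; constructor <;> linarith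
    calc _ ≤ 1 * Real.log M := by gcongr
      _ ≤ _ := by linarith
  have ident : ∑ k ∈ Finset.Icc 1 M, a k * (Real.log k - y / k + 1)
      - -(c + κ * Real.eulerMascheroniConstant) * y
      = ∑ k ∈ Finset.Icc 1 M, (a k - κ) * Real.log k
        - y * (∑ k ∈ Finset.Icc 1 M, (a k - κ) / k - c)
        + ∑ k ∈ Finset.Icc 1 M, (a k - κ)
        + κ * ((∑ k ∈ Finset.Icc 1 M, Real.log k - (M * Real.log M - M))
          - y * (∑ k ∈ Finset.Icc 1 M, 1 / (k : ℝ) - (Real.log M + Real.eulerMascheroniConstant))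
          + ((M : ℝ) - y) * Real.log M) := by
    have e1 : ∑ k ∈ Finset.Icc 1 M, a k * (Real.log k - y / k + 1)
       = ∑ k ∈ Finset.Icc 1 M, (a k - κ) * Real.log k
        - y * (∑ k ∈ Finset.Icc 1 M, (a k - κ) / k)
        + ∑ k ∈ Finset.Icc 1 M, (a k - κ)
        + κ * (∑ k ∈ Finset.Icc 1 M, Real.log k - y * (∑ k ∈ Finset.Icc 1 M, 1 / (k : ℝ)) + M) := by
      have : (M : ℝ) = ∑ k ∈ Finset.Icc 1 M, (1 : ℝ) := by simp
      rw [this]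
      simp only [Finset.mul_sum, ← Finset.sum_add_distrib, ← Finset.sum_sub_distrib]
      apply Finset.sum_congr rfl
      intro k _
      ring
    rw [e1]; ring
  rw [ident]
  set s1 := ∑ k ∈ Finset.Icc 1 M, (a k - κ) * Real.log k
  set s2 := y * (∑ k ∈ Finset.Icc 1 M, (a k - κ) / k - c)
  set s3 := ∑ k ∈ Finset.Icc 1 M, (a k - κ)
  set s4 := ∑ k ∈ Finset.Icc 1 M, Real.log k - (M * Real.log M - M)
  set s5 := y * (∑ k ∈ Finset.Icc 1 M, 1 / (k : ℝ) - (Real.log M + Real.eulerMascheroniConstant))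
  set s6 := ((M : ℝ) - y) * Real.log M
  have u1 : |κ * (s4 - s5 + s6)| ≤ |κ| * ((2 / β + 3) * y ^ β) := by
    rw [abs_mul]
    gcongr
    have := abs_add_le (s4 - s5) s6
    have := abs_sub s4 s5
    have e : (2 / β + 3) * y ^ β = y ^ β / β + y ^ β / β + 3 * y ^ β := by ring
    rw [e]
    linarith
  have := abs_add_le (s1 - s2 + s3) (κ * (s4 - s5 + s6))
  have := abs_add_le (s1 - s2) s3
  have := abs_sub s1 s2
  have e : (2 * C / (β - α) + 2 * K1 + C + |κ| * (2 / β + 3)) * y ^ β =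
    2 * C / (β - α) * y ^ β + 2 * K1 * y ^ β + C * y ^ β + |κ| * ((2 / β + 3) * y ^ β) := by ring
  rw [e]
  linarith

lemma T_est (a : ℕ → ℝ) (κ C α : ℝ) (hα : 0 ≤ α) (hα1 : α < 1) (hC : 0 ≤ C)
    (hA : ∀ n : ℕ, 1 ≤ n → |∑ k ∈ Finset.Icc 1 n, a k - κ * n| ≤ C * (n : ℝ) ^ α) :
    ∃ K : ℝ, ∀ n : ℕ, 1 ≤ n →
      |∑ k ∈ Finset.Icc 1 n, a k * Real.log k - κ * (n * Real.log n)| ≤ K * n := by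
  have hE : ∀ n : ℕ, 1 ≤ n → |∑ k ∈ Finset.Icc 1 n, (a k - κ)| ≤ C * (n : ℝ) ^ α := by
    intro n hn
    have := hA n hn
    rw [Finset.sum_sub_distrib, Finset.sum_const, Nat.card_Icc]
    simpa [mul_comm] using this
  have hlogE := abel_log _ C α hα hC hE
  refine ⟨2 * C / (1 - α) + |κ| * 3, fun n hn => ?_⟩
  have hn0 : (0 : ℝ) < n := by exact_mod_cast hn
  have hn1 : (1 : ℝ) ≤ n := by exact_mod_cast hn
  have h1α : 0 < 1 - α := by linarith
  have hl : Real.log n ≤ (n : ℝ) ^ (1 - α) / (1 - α) := Real.log_le_rpow_div hn0.le h1α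
  have hl2 : Real.log n ≤ n - 1 := Real.log_le_sub_one_of_pos hn0
  have t1 : |∑ k ∈ Finset.Icc 1 n, (a k - κ) * Real.log k| ≤ 2 * C / (1 - α) * n := by
    refine (hlogE n hn).trans ?_
    calc 2 * C * (n : ℝ) ^ α * Real.log n ≤ 2 * C * (n : ℝ) ^ α * ((n : ℝ) ^ (1 - α) / (1 - α)) := by
          gcongr
      _ = 2 * C / (1 - α) * ((n : ℝ) ^ α * (n : ℝ) ^ (1 - α)) := by ring
      _ = _ := by rw [← Real.rpow_add hn0]; simp
  have t2 : |∑ k ∈ Finset.Icc 1 n, Real.log k - n * Real.log n| ≤ 3 * n := by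
    have := abs_le.1 (log_sum n hn)
    rw [abs_le]
    constructor <;> linarith [this.1, this.2]
  have ident : ∑ k ∈ Finset.Icc 1 n, a k * Real.log k - κ * (n * Real.log n)
     = ∑ k ∈ Finset.Icc 1 n, (a k - κ) * Real.log k
       + κ * (∑ k ∈ Finset.Icc 1 n, Real.log k - n * Real.log n) := by
    rw [mul_sub, ← add_sub_assoc]
    congr 1
    rw [Finset.mul_sum, ← Finset.sum_add_distrib]
    apply Finset.sum_congr rfl
    intro k _
    ring
  rw [ident]
  refine (abs_add_le _ _).trans ?_
  rw [abs_mul]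
  calc _ ≤ 2 * C / (1 - α) * n + |κ| * (3 * n) := by gcongr
    _ = _ := by ring

end PartP2

section PartP3
section basics
variable {P : Type*} {N : P → ℕ}

def HFin (N : P → ℕ) : Prop := ∀ y : ℝ, {m : P →₀ ℕ | (Nm N m : ℝ) ≤ y}.Finite

def MF (N : P → ℕ) (y : ℝ) : Finset (P →₀ ℕ) :=
  if hf : {m : P →₀ ℕ | (Nm N m : ℝ) ≤ y}.Finite then hf.toFinset else ∅

def PF (N : P → ℕ) (y : ℝ) : Finset P :=
  if hf : {p : P | (N p : ℝ) ≤ y}.Finite then hf.toFinset else ∅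

def cnt (N : P → ℕ) (y : ℝ) : ℝ := ((MF N y).card : ℝ)

lemma mem_MF (hf : HFin N) {y : ℝ} {m : P →₀ ℕ} : m ∈ MF N y ↔ (Nm N m : ℝ) ≤ y := by
  simp [MF, hf y]

lemma Nm_zero : Nm N 0 = 1 := by simp [Nm]

lemma Nm_add (m n : P →₀ ℕ) : Nm N (m + n) = Nm N m * Nm N n := by
  unfold Nm
  apply Finsupp.prod_add_index'
  · simp
  · intro a b c; exact pow_add _ _ _

lemma Nm_single (p : P) (k : ℕ) : Nm N (Finsupp.single p k) = N p ^ k := by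
  unfold Nm
  simp

lemma Nm_pos (hN : ∀ p, 2 ≤ N p) (m : P →₀ ℕ) : 0 < Nm N m := by
  unfold Nm
  apply Finset.prod_pos
  intro p _
  have := hN p
  positivity

lemma Nm_pos' (hN : ∀ p, 2 ≤ N p) (m : P →₀ ℕ) : (0 : ℝ) < Nm N m := by
  exact_mod_cast Nm_pos hN m

lemma Nm_one_le (hN : ∀ p, 2 ≤ N p) (m : P →₀ ℕ) : (1 : ℝ) ≤ Nm N m := by
  exact_mod_cast Nm_pos hN m

lemma Nm_mono (hN : ∀ p, 2 ≤ N p) {m n : P →₀ ℕ} (h : m ≤ n) : Nm N m ≤ Nm N n := by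
  obtain ⟨k, rfl⟩ := exists_add_of_le h
  rw [Nm_add]
  exact Nat.le_mul_of_pos_right _ (Nm_pos hN k)

lemma PFin (hf : HFin N) (y : ℝ) : {p : P | (N p : ℝ) ≤ y}.Finite := by
  apply Set.Finite.of_finite_image (f := fun p => Finsupp.single p 1)
  · apply (hf y).subset
    rintro _ ⟨p, hp, rfl⟩
    simpa [Nm_single] using hp
  · intro p _ q _ h
    exact Finsupp.single_left_injective one_ne_zero h

lemma mem_PF (hf : HFin N) {y : ℝ} {p : P} : p ∈ PF N y ↔ (N p : ℝ) ≤ y := by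
  simp [PF, PFin hf y]

lemma cnt_eq (hf : HFin N) (y : ℝ) :
    cnt N y = ({m : P →₀ ℕ | (Nm N m : ℝ) ≤ y}.ncard : ℝ) := by
  unfold cnt MF
  rw [dif_pos (hf y), ← Set.ncard_coe_finset]
  simp

lemma HFin_of_star {κ θ : ℝ} (hstar : StarCond N κ θ) : HFin N := by
  obtain ⟨hκ, hθ0, hθ1, hO⟩ := hstar
  intro y
  have h1 : (fun x : ℝ => x ^ θ) =o[atTop] fun x : ℝ => x := by
    have h := tendsto_rpow_neg_atTop (y := 1 - θ) (by linarith)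
    rw [isLittleO_iff_tendsto' (by
      filter_upwards [eventually_gt_atTop 0] with x hx hx0
      exact absurd hx0 hx.ne')]
    refine h.congr' ?_
    filter_upwards [eventually_gt_atTop 0] with x hx
    rw [neg_sub, Real.rpow_sub_one hx.ne']
  have h2 := (hO.trans_isLittleO h1).def (half_pos hκ)
  obtain ⟨x, hx1, hx2, hx3⟩ := (h2.and ((eventually_ge_atTop y).and (eventually_gt_atTop 0))).exists
  by_contra hinf
  have hinf2 : {m : P →₀ ℕ | (Nm N m : ℝ) ≤ x}.Infinite := by
    intro h
    exact hinf (h.subset fun m hm => le_trans hm hx2)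
  rw [hinf2.ncard] at hx1
  simp only [Nat.cast_zero, zero_sub, norm_neg, Real.norm_eq_abs] at hx1
  rw [abs_of_pos (by positivity), abs_of_pos hx3] at hx1
  nlinarith

lemma MF_empty (hN : ∀ p, 2 ≤ N p) (hf : HFin N) {y : ℝ} (hy : y < 1) : MF N y = ∅ := by
  apply Finset.eq_empty_of_forall_notMem
  intro m hm
  rw [mem_MF hf] at hm
  linarith [Nm_one_le hN m]

lemma MF_mono (hf : HFin N) {y z : ℝ} (h : y ≤ z) : MF N y ⊆ MF N z := by
  intro m hm
  rw [mem_MF hf] at hm ⊢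
  linarith

lemma cnt_zero (hN : ∀ p, 2 ≤ N p) (hf : HFin N) {y : ℝ} (hy : y < 1) : cnt N y = 0 := by
  simp [cnt, MF_empty hN hf hy]

lemma cnt_bound (hN : ∀ p, 2 ≤ N p) {κ θ : ℝ} (hstar : StarCond N κ θ) {α : ℝ}
    (hα : θ ≤ α) (hα1 : α < 1) :
    ∃ C : ℝ, 0 ≤ C ∧ ∀ z : ℝ, 0 < z → |cnt N z - κ * z| ≤ C * z ^ α := by
  have hf := HFin_of_star hstar
  obtain ⟨hκ, hθ0, hθ1, hO⟩ := hstar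
  obtain ⟨c, hc⟩ := hO.bound
  obtain ⟨z0, hz0⟩ := eventually_atTop.1 hc
  set z1 := max z0 1
  have hz1 : 1 ≤ z1 := le_max_right _ _
  have hα0 : 0 ≤ α := hθ0.trans hα
  have hcz : 0 ≤ cnt N z1 := by unfold cnt; positivity
  refine ⟨|c| + (cnt N z1 + κ * z1) + κ, by positivity, fun z hz => ?_⟩
  have hza : 0 < z ^ α := by positivity
  rcases lt_or_ge z 1 with h1 | h1
  · rw [cnt_zero hN hf h1, zero_sub, abs_neg, abs_of_pos (by positivity)]
    have : z ≤ z ^ α := by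
      calc z = z ^ (1 : ℝ) := by simp
        _ ≤ z ^ α := Real.rpow_le_rpow_of_exponent_ge hz h1.le hα1.le
    calc κ * z ≤ κ * z ^ α := by gcongr
      _ ≤ _ := by
        gcongr
        have : 0 ≤ |c| + (cnt N z1 + κ * z1) := by positivity
        linarith
  · have hzθ : z ^ θ ≤ z ^ α := Real.rpow_le_rpow_of_exponent_le h1 hα
    rcases le_or_gt z1 z with h2 | h2
    · have := hz0 z ((le_max_left _ _).trans h2)
      rw [Real.norm_eq_abs, Real.norm_eq_abs, abs_of_pos (by positivity : 0 < z ^ θ), ← cnt_eq hf] at this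
      refine this.trans ?_
      calc c * z ^ θ ≤ |c| * z ^ α := by gcongr; exact le_abs_self c
        _ ≤ _ := by
          gcongr
          have : 0 ≤ cnt N z1 + κ * z1 := by positivity
          linarith
    · have h3 : cnt N z ≤ cnt N z1 := by
        unfold cnt
        exact_mod_cast Finset.card_le_card (MF_mono hf h2.le)
      have h4 : 0 ≤ cnt N z := by unfold cnt; positivity
      have h5 : 1 ≤ z ^ α := Real.one_le_rpow h1 hα0
      have h6 : |cnt N z - κ * z| ≤ cnt N z1 + κ * z1 := by
        have : κ * z ≤ κ * z1 := by gcongr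
        have : 0 ≤ κ * z := by positivity
        rw [abs_le]; constructor <;> linarith
      calc _ ≤ (cnt N z1 + κ * z1) * 1 := by linarith
        _ ≤ (|c| + (cnt N z1 + κ * z1) + κ) * z ^ α := by
          apply mul_le_mul _ h5 zero_le_one (by positivity)
          have := abs_nonneg c
          linarith

lemma shift_sum (hN : ∀ p, 2 ≤ N p) (hf : HFin N) (d : P →₀ ℕ) (y : ℝ) (g : (P →₀ ℕ) → ℝ) :
    ∑ m ∈ MF N (y / Nm N d), g (m + d) = ∑ k ∈ MF N y with d ≤ k, g k := by
  have hd := Nm_pos' hN d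
  apply Finset.sum_bij' (fun m _ => m + d) (fun k _ => k - d)
  · intro m hm
    rw [mem_MF hf, le_div_iff₀ hd] at hm
    rw [Finset.mem_filter, mem_MF hf, Nm_add]
    push_cast
    exact ⟨hm, le_add_self⟩
  · intro k hk
    rw [Finset.mem_filter, mem_MF hf] at hk
    rw [mem_MF hf, le_div_iff₀ hd]
    have := Nm_add (N := N) (k - d) d
    rw [tsub_add_cancel_of_le hk.2] at this
    rw [this] at hk
    exact_mod_cast hk.1
  · intro m _
    simp
  · intro k hk
    rw [Finset.mem_filter] at hk
    exact tsub_add_cancel_of_le hk.2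
  · intro m _
    rfl

lemma single_le_iff' (p : P) (j : ℕ) (m : P →₀ ℕ) : Finsupp.single p j ≤ m ↔ j ≤ m p := by
  constructor
  · intro h; simpa using h p
  · intro h q
    by_cases hq : q = p
    · subst hq; simpa using h
    · rw [Finsupp.single_eq_of_ne hq]; exact Nat.zero_le _

lemma supp_sub_PF (hN : ∀ p, 2 ≤ N p) (hf : HFin N) {y : ℝ} {m : P →₀ ℕ} (hm : m ∈ MF N y) :
    m.support ⊆ PF N y := by
  intro p hp
  rw [mem_PF hf]
  rw [mem_MF hf] at hm
  have h1 : Finsupp.single p 1 ≤ m := by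
    rw [single_le_iff']
    exact Nat.one_le_iff_ne_zero.2 (Finsupp.mem_support_iff.1 hp)
  have := Nm_mono hN h1
  rw [Nm_single, pow_one] at this
  have : (N p : ℝ) ≤ Nm N m := by exact_mod_cast this
  linarith

lemma log_Nm (hN : ∀ p, 2 ≤ N p) (m : P →₀ ℕ) :
    Real.log (Nm N m) = ∑ p ∈ m.support, (m p : ℝ) * Real.log (N p) := by
  unfold Nm Finsupp.prod
  push_cast
  rw [Real.log_prod]
  · apply Finset.sum_congr rfl
    intro p _
    rw [Real.log_pow]
  · intro p _
    have := hN p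
    positivity

lemma pow_le_bound (hN : ∀ p, 2 ≤ N p) {p : P} {j : ℕ} {X : ℝ} (h : (N p : ℝ) ^ j ≤ X) : j ≤ ⌊X⌋₊ := by
  apply Nat.le_floor
  have h1 : j < N p ^ j := Nat.lt_pow_self (hN p)
  have : (j : ℝ) ≤ (N p : ℝ) ^ j := by exact_mod_cast h1.le
  linarith

lemma T_ident (hN : ∀ p, 2 ≤ N p) (hf : HFin N) {y X : ℝ} (hyX : y ≤ X) :
    ∑ m ∈ MF N y, Real.log (Nm N m) = ∑ p ∈ PF N X, ∑ j ∈ Finset.Icc 1 ⌊X⌋₊,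
      Real.log (N p) * cnt N (y / (N p : ℝ) ^ j) := by
  have h1 : ∀ m ∈ MF N y, Real.log (Nm N m) = ∑ p ∈ PF N X, ∑ j ∈ Finset.Icc 1 ⌊X⌋₊,
      if Finsupp.single p j ≤ m then Real.log (N p) else 0 := by
    intro m hm
    rw [log_Nm hN]
    have hsub : m.support ⊆ PF N X := supp_sub_PF hN hf (MF_mono hf hyX hm)
    rw [Finset.sum_subset hsub]
    · apply Finset.sum_congr rfl
      intro p _
      rw [← Finset.sum_filter, Finset.sum_const, nsmul_eq_mul]
      congr 2
      have : (Finset.Icc 1 ⌊X⌋₊).filter (fun j => Finsupp.single p j ≤ m) = Finset.Icc 1 (m p) := by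
        ext j
        rw [Finset.mem_filter, Finset.mem_Icc, Finset.mem_Icc, single_le_iff']
        constructor
        · rintro ⟨⟨h1, h2⟩, h3⟩; exact ⟨h1, h3⟩
        · rintro ⟨h1, h3⟩
          refine ⟨⟨h1, ?_⟩, h3⟩
          apply pow_le_bound hN (p := p)
          have := Nm_mono hN ((single_le_iff' p j m).2 h3)
          rw [Nm_single] at this
          rw [mem_MF hf] at hm
          have : (N p : ℝ) ^ j ≤ Nm N m := by exact_mod_cast this
          linarith
      rw [this]
      simp
    · intro p _ hp
      rw [Finsupp.notMem_support_iff.1 hp]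
      simp
  rw [Finset.sum_congr rfl h1, Finset.sum_comm]
  apply Finset.sum_congr rfl
  intro p _
  rw [Finset.sum_comm]
  apply Finset.sum_congr rfl
  intro j _
  rw [← Finset.sum_filter]
  have := shift_sum hN hf (Finsupp.single p j) y (fun _ => Real.log (N p))
  rw [Nm_single] at this
  push_cast at this
  rw [← this]
  simp [cnt, mul_comm]

def ind (S : Finset P) : P →₀ ℕ := Finsupp.indicator S (fun _ _ => 1)

lemma ind_le_iff (S : Finset P) (k : P →₀ ℕ) : ind S ≤ k ↔ S ⊆ k.support := by
  constructor
  · intro h p hp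
    have := h p
    rw [ind, Finsupp.indicator_of_mem hp] at this
    rw [Finsupp.mem_support_iff]
    omega
  · intro h p
    by_cases hp : p ∈ S
    · rw [ind, Finsupp.indicator_of_mem hp]
      have := Finsupp.mem_support_iff.1 (h hp)
      omega
    · rw [ind, Finsupp.indicator_of_notMem hp]
      exact Nat.zero_le _

lemma ind_inj : Function.Injective (ind : Finset P → P →₀ ℕ) := by
  intro S T h
  have : ∀ U : Finset P, (ind U).support = U := by
    intro U
    ext p
    rw [Finsupp.mem_support_iff]
    by_cases hp : p ∈ U
    · simp [ind, Finsupp.indicator_of_mem hp, hp]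
    · simp [ind, Finsupp.indicator_of_notMem hp, hp]
  rw [← this S, h, this T]

lemma mobius_inv (hN : ∀ p, 2 ≤ N p) (hf : HFin N) {y X : ℝ} (hy : 1 ≤ y) (hyX : y ≤ X)
    (f : ℝ → ℝ) :
    ∑ S ∈ (PF N X).powerset, (-1 : ℝ) ^ S.card *
      ∑ m ∈ MF N (y / Nm N (ind S)), f ((Nm N (ind S) : ℝ) * Nm N m) = f 1 := by
  have h1 : ∀ S ∈ (PF N X).powerset, (-1 : ℝ) ^ S.card *
      ∑ m ∈ MF N (y / Nm N (ind S)), f ((Nm N (ind S) : ℝ) * Nm N m)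
      = ∑ k ∈ MF N y, if S ⊆ k.support then (-1 : ℝ) ^ S.card * f (Nm N k) else 0 := by
    intro S _
    have := shift_sum hN hf (ind S) y (fun k => f (Nm N k))
    simp only [Nm_add] at this
    push_cast at this
    simp only [mul_comm ((Nm N (ind S) : ℝ))]
    rw [this, Finset.mul_sum, Finset.sum_filter]
    simp only [ind_le_iff]
  rw [Finset.sum_congr rfl h1, Finset.sum_comm]
  have h2 : ∀ k ∈ MF N y, (∑ S ∈ (PF N X).powerset,
      if S ⊆ k.support then (-1 : ℝ) ^ S.card * f (Nm N k) else 0) = if k = 0 then f 1 else 0 := by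
    intro k hk
    rw [← Finset.sum_filter]
    have hsub : k.support ⊆ PF N X := supp_sub_PF hN hf (MF_mono hf hyX hk)
    have : (PF N X).powerset.filter (fun S => S ⊆ k.support) = k.support.powerset := by
      ext S
      simp only [Finset.mem_filter, Finset.mem_powerset]
      exact ⟨fun h => h.2, fun h => ⟨h.trans hsub, h⟩⟩
    rw [this, ← Finset.sum_mul]
    have h3 := congrArg (Int.cast : ℤ → ℝ) (Finset.sum_powerset_neg_one_pow_card (x := k.support))
    push_cast at h3
    rw [h3]
    by_cases hk0 : k = 0
    · subst hk0; simp [Nm_zero]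
    · simp [hk0]
  rw [Finset.sum_congr rfl h2]
  simp only [Finset.sum_ite_eq', mem_MF hf, Nm_zero]
  simp [hy]

lemma mobius_cnt (hN : ∀ p, 2 ≤ N p) (hf : HFin N) {y X : ℝ} (hyX : y ≤ X) (hy : 0 ≤ y) :
    ∑ S ∈ (PF N X).powerset, (-1 : ℝ) ^ S.card * cnt N (y / Nm N (ind S)) =
      if 1 ≤ y then 1 else 0 := by
  split_ifs with h
  · have := mobius_inv hN hf h hyX (fun _ => 1)
    simpa [cnt] using this
  · apply Finset.sum_eq_zero
    intro S _
    rw [cnt_zero hN hf, mul_zero]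
    have := Nm_one_le hN (ind S)
    exact (div_le_self hy this).trans_lt (not_le.1 h)

def acoef (N : P → ℕ) (k : ℕ) : ℝ := (((MF N k).filter (fun m => Nm N m = k)).card : ℝ)

lemma acoef_sum (hN : ∀ p, 2 ≤ N p) (hf : HFin N) (y : ℝ) (f : ℕ → ℝ) :
    ∑ k ∈ Finset.Icc 1 ⌊y⌋₊, acoef N k * f k = ∑ m ∈ MF N y, f (Nm N m) := by
  have hmaps : ∀ m ∈ MF N y, Nm N m ∈ Finset.Icc 1 ⌊y⌋₊ := by
    intro m hm
    rw [mem_MF hf] at hm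
    exact Finset.mem_Icc.2 ⟨Nm_pos hN m, Nat.le_floor hm⟩
  rw [← Finset.sum_fiberwise_of_maps_to hmaps]
  apply Finset.sum_congr rfl
  intro k hk
  have : (MF N y).filter (fun m => Nm N m = k) = (MF N k).filter (fun m => Nm N m = k) := by
    ext m
    simp only [Finset.mem_filter, mem_MF hf]
    constructor
    · rintro ⟨_, h⟩; exact ⟨by rw [h], h⟩
    · rintro ⟨_, h⟩
      refine ⟨?_, h⟩
      rw [h]
      have h1 := (Finset.mem_Icc.1 hk)
      exact (Nat.le_floor_iff' (by omega)).1 h1.2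
  rw [this, acoef, ← nsmul_eq_mul, ← Finset.sum_const]
  apply Finset.sum_congr rfl
  intro m hm
  rw [(Finset.mem_filter.1 hm).2]

end basics

end PartP3

section PartP4
section cheb
variable {P : Type*} {N : P → ℕ}

lemma cnt_nonneg (z : ℝ) : 0 ≤ cnt N z := by unfold cnt; positivity

lemma cnt_le (hN : ∀ p, 2 ≤ N p) {κ θ : ℝ} (hstar : StarCond N κ θ) :
    ∃ C : ℝ, 0 ≤ C ∧ ∀ z : ℝ, 0 ≤ z → cnt N z ≤ C * z := by
  have hf := HFin_of_star hstar
  obtain ⟨C, hC, h⟩ := cnt_bound hN hstar le_rfl hstar.2.2.1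
  have hκ := hstar.1
  refine ⟨κ + C, by positivity, fun z hz => ?_⟩
  rcases lt_or_ge z 1 with h1 | h1
  · rw [cnt_zero hN hf h1]; positivity
  · have h2 := (abs_le.1 (h z (by linarith))).2
    have : z ^ θ ≤ z := by
      calc z ^ θ ≤ z ^ (1 : ℝ) := Real.rpow_le_rpow_of_exponent_le h1 hstar.2.2.1.le
        _ = z := by simp
    have := mul_le_mul_of_nonneg_left this hC
    linarith

lemma rpow_anti {s : ℝ} (hs : 0 ≤ s) (n : ℕ) (hn : 1 ≤ n) :
    ((n + 1 : ℕ) : ℝ) ^ (-s) ≤ (n : ℝ) ^ (-s) := by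
  apply Real.rpow_le_rpow_of_nonpos
  · exact_mod_cast hn
  · push_cast; linarith
  · linarith

lemma sumM_dom (hN : ∀ p, 2 ≤ N p) {κ θ : ℝ} (hstar : StarCond N κ θ) :
    ∃ C : ℝ, 0 ≤ C ∧ ∀ s : ℝ, 0 ≤ s → ∀ X : ℝ, ∑ m ∈ MF N X, (Nm N m : ℝ) ^ (-s) ≤
      C * ∑ n ∈ Finset.Icc 1 ⌊X⌋₊, (n : ℝ) ^ (-s) := by
  have hf := HFin_of_star hstar
  obtain ⟨C, hC, h⟩ := cnt_le hN hstar
  refine ⟨C, hC, fun s hs X => ?_⟩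
  have := dom_sum (MF N X) (Nm N) (fun _ => (1 : ℝ)) C (fun m _ => Nm_pos hN m) (fun k => by
      refine le_trans ?_ (h k (Nat.cast_nonneg k))
      rw [Finset.sum_const, nsmul_eq_mul, mul_one, cnt]
      have : (MF N X).filter (fun m => Nm N m ≤ k) ⊆ MF N k := by
        intro m hm
        rw [mem_MF hf]
        exact_mod_cast (Finset.mem_filter.1 hm).2
      exact_mod_cast Finset.card_le_card this) (fun n => (n : ℝ) ^ (-s))
      (rpow_anti hs) (fun n => by positivity) ⌊X⌋₊ (fun m hm => by
        rw [mem_MF hf] at hm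
        exact Nat.le_floor hm)
  simpa using this

lemma floor_rpow_le {s X : ℝ} (hs : 0 ≤ s) (hX : 0 ≤ X) : (⌊X⌋₊ : ℝ) ^ s ≤ X ^ s := by
  gcongr
  exact Nat.floor_le hX

lemma sumM_lt (hN : ∀ p, 2 ≤ N p) {κ θ : ℝ} (hstar : StarCond N κ θ) {s : ℝ} (hs : 0 ≤ s)
    (hs1 : s < 1) :
    ∃ C : ℝ, 0 ≤ C ∧ ∀ X : ℝ, 0 ≤ X → ∑ m ∈ MF N X, (Nm N m : ℝ) ^ (-s) ≤ C * X ^ (1 - s) := by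
  obtain ⟨C, hC, h⟩ := sumM_dom hN hstar
  have h1 : 0 < 1 - s := by linarith
  refine ⟨C / (1 - s), by positivity, fun X hX => (h s hs X).trans ?_⟩
  calc _ ≤ C * ((⌊X⌋₊ : ℝ) ^ (1 - s) / (1 - s)) := by gcongr; exact sum_rpow_le hs hs1 _
    _ ≤ C * (X ^ (1 - s) / (1 - s)) := by gcongr; exact Nat.floor_le hX
    _ = _ := by ring

lemma summable_M (hN : ∀ p, 2 ≤ N p) {κ θ : ℝ} (hstar : StarCond N κ θ) {s : ℝ} (hs : 1 < s) :
    Summable (fun m : P →₀ ℕ => (Nm N m : ℝ) ^ (-s)) := by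
  have hf := HFin_of_star hstar
  obtain ⟨C, hC, h⟩ := sumM_dom hN hstar
  have hsum : Summable (fun n : ℕ => (n : ℝ) ^ (-s)) := Real.summable_nat_rpow.2 (by linarith)
  refine summable_of_sum_le (c := C * ∑' n : ℕ, (n : ℝ) ^ (-s)) (fun m => by positivity) (fun u => ?_)
  have hsub : u ⊆ MF N ((u.sup (Nm N) : ℕ) : ℝ) := by
    intro m hm
    rw [mem_MF hf]
    exact_mod_cast Finset.le_sup (f := Nm N) hm
  refine (Finset.sum_le_sum_of_subset_of_nonneg hsub (fun m _ _ => by positivity)).trans ?_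
  refine (h s (by linarith) _).trans ?_
  gcongr
  exact hsum.sum_le_tsum _ (fun n _ => by positivity)

lemma summable_P (hN : ∀ p, 2 ≤ N p) {κ θ : ℝ} (hstar : StarCond N κ θ) {s : ℝ} (hs : 1 < s) :
    Summable (fun p : P => (N p : ℝ) ^ (-s)) := by
  have := (summable_M hN hstar hs).comp_injective
    (Finsupp.single_left_injective (α := P) (b := (1 : ℕ)) one_ne_zero)
  refine this.congr (fun p => ?_)
  simp [Nm_single]

def PS (N : P → ℕ) (X : ℝ) : Finset (P × ℕ) :=
  ((PF N X) ×ˢ Finset.Icc 1 ⌊X⌋₊).filter (fun i => (N i.1 : ℝ) ^ i.2 ≤ X)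

lemma mem_PS (hN : ∀ p, 2 ≤ N p) (hf : HFin N) {X : ℝ} {i : P × ℕ} :
    i ∈ PS N X ↔ 1 ≤ i.2 ∧ (N i.1 : ℝ) ^ i.2 ≤ X := by
  rw [PS, Finset.mem_filter, Finset.mem_product, mem_PF hf, Finset.mem_Icc]
  constructor
  · rintro ⟨⟨_, h1, _⟩, h2⟩; exact ⟨h1, h2⟩
  · rintro ⟨h1, h2⟩
    refine ⟨⟨?_, h1, pow_le_bound hN h2⟩, h2⟩
    refine le_trans ?_ h2
    have : 1 ≤ (N i.1 : ℝ) := by exact_mod_cast (by linarith [hN i.1] : 1 ≤ N i.1)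
    calc (N i.1 : ℝ) = (N i.1 : ℝ) ^ 1 := by simp
      _ ≤ _ := pow_le_pow_right₀ this h1

def psi (N : P → ℕ) (X : ℝ) : ℝ := ∑ i ∈ PS N X, Real.log (N i.1)

lemma logN_nonneg (p : P) : 0 ≤ Real.log (N p) := Real.log_natCast_nonneg _

lemma T_ident_PS (hN : ∀ p, 2 ≤ N p) (hf : HFin N) {X : ℝ} :
    ∑ m ∈ MF N X, Real.log (Nm N m) =
      ∑ i ∈ PS N X, Real.log (N i.1) * cnt N (X / (N i.1 : ℝ) ^ i.2) := by
  rw [T_ident hN hf le_rfl, PS, Finset.sum_filter, Finset.sum_product]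
  apply Finset.sum_congr rfl
  intro p _
  apply Finset.sum_congr rfl
  intro j _
  split_ifs with h
  · rfl
  · have : 0 < (N p : ℝ) := by exact_mod_cast (by linarith [hN p] : 0 < N p)
    rw [cnt_zero hN hf, mul_zero]
    rw [div_lt_one (by positivity)]
    exact not_le.1 h

lemma psi_ident (hN : ∀ p, 2 ≤ N p) (hf : HFin N) {X : ℝ} (hX : 0 ≤ X) :
    psi N X = ∑ S ∈ (PF N X).powerset, (-1 : ℝ) ^ S.card *
      ∑ m ∈ MF N (X / Nm N (ind S)), Real.log (Nm N m) := by
  have h1 : ∀ S ∈ (PF N X).powerset, (-1 : ℝ) ^ S.card *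
      ∑ m ∈ MF N (X / Nm N (ind S)), Real.log (Nm N m)
      = ∑ p ∈ PF N X, ∑ j ∈ Finset.Icc 1 ⌊X⌋₊, Real.log (N p) *
        ((-1 : ℝ) ^ S.card * cnt N (X / (N p : ℝ) ^ j / Nm N (ind S))) := by
    intro S _
    rw [T_ident hN hf (div_le_self hX (Nm_one_le hN _)), Finset.mul_sum]
    apply Finset.sum_congr rfl
    intro p _
    rw [Finset.mul_sum]
    apply Finset.sum_congr rfl
    intro j _
    rw [div_right_comm]
    ring
  rw [Finset.sum_congr rfl h1, Finset.sum_comm, psi, PS, Finset.sum_filter, Finset.sum_product]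
  apply Finset.sum_congr rfl
  intro p _
  rw [Finset.sum_comm]
  apply Finset.sum_congr rfl
  intro j _
  have hp1 : 1 ≤ (N p : ℝ) := by exact_mod_cast (by linarith [hN p] : 1 ≤ N p)
  have hp : 1 ≤ (N p : ℝ) ^ j := one_le_pow₀ hp1
  rw [← Finset.mul_sum, mobius_cnt hN hf (div_le_self hX hp) (by positivity)]
  simp only [one_le_div (by linarith : 0 < (N p : ℝ) ^ j)]
  split_ifs <;> simp

lemma cheb (hN : ∀ p, 2 ≤ N p) {κ θ : ℝ} (hstar : StarCond N κ θ) :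
    ∃ C : ℝ, 0 ≤ C ∧ ∀ X : ℝ, 0 ≤ X → psi N X ≤ C * X := by
  have hf := HFin_of_star hstar
  obtain ⟨hκ, hθ0, hθ1, -⟩ := id hstar
  obtain ⟨C, hC, hb⟩ := cnt_bound hN hstar le_rfl hθ1
  obtain ⟨c0, K, β, hK, hαβ, hβ0, hβ1, hG⟩ := G_est (acoef N) κ C θ hθ0 hθ1 hC (fun n hn => by
    have := acoef_sum hN hf n (fun _ => 1)
    simp only [mul_one, Nat.floor_natCast] at this
    rw [this]
    have := hb n (by exact_mod_cast hn)
    simpa [cnt] using this)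
  obtain ⟨C2, hC2, hM⟩ := sumM_lt hN hstar hβ0 hβ1
  set b := c0 / κ with hbdef
  set G : ℝ → ℝ := fun y => ∑ m ∈ MF N y, (Real.log (Nm N m) - y / Nm N m + 1) - b * cnt N y with hGdef
  set K2 := K + |b| * C with hK2def
  have hGb : ∀ y, 1 ≤ y → |G y| ≤ K2 * y ^ β := by
    intro y hy
    have h1 := hG y hy
    rw [acoef_sum hN hf y (fun k => Real.log k - y / k + 1)] at h1
    have h2 := hb y (by linarith)
    have e : G y = (∑ m ∈ MF N y, (Real.log (Nm N m) - y / Nm N m + 1) - c0 * y)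
        - b * (cnt N y - κ * y) := by
      simp only [hGdef, hbdef]; field_simp; ring
    rw [e]
    refine (abs_sub _ _).trans ?_
    rw [abs_mul]
    have h3 : y ^ θ ≤ y ^ β := Real.rpow_le_rpow_of_exponent_le hy hαβ
    calc _ ≤ K * y ^ β + |b| * (C * y ^ β) := by gcongr; exact h2.trans (by gcongr)
      _ = _ := by ring
  have hG0 : ∀ y, y < 1 → G y = 0 := by
    intro y hy
    simp [hGdef, MF_empty hN hf hy, cnt]
  refine ⟨1 + |b| + K2 * C2, by positivity, fun X hX0 => ?_⟩
  rcases lt_or_ge X 1 with hX | hX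
  · have : PS N X = ∅ := by
      apply Finset.eq_empty_of_forall_notMem
      intro i hi
      rw [mem_PS hN hf] at hi
      have hp1 : 1 ≤ (N i.1 : ℝ) := by exact_mod_cast (by linarith [hN i.1] : 1 ≤ N i.1)
      linarith [one_le_pow₀ hp1 (n := i.2), hi.2]
    rw [psi, this]
    simp only [Finset.sum_empty]
    positivity
  have hXpos : 0 < X := by linarith
  have ident : psi N X = (X - 1) + b + ∑ S ∈ (PF N X).powerset, (-1 : ℝ) ^ S.card * G (X / Nm N (ind S)) := by
    rw [psi_ident hN hf hX0]
    have i1 := mobius_inv hN hf hX le_rfl (fun t => X / t - 1)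
    have i2 := mobius_cnt hN hf (le_refl X) hX0
    rw [if_pos hX] at i2
    simp only [div_one] at i1
    have i3 : X - 1 + b = ∑ S ∈ (PF N X).powerset, (-1 : ℝ) ^ S.card *
        ∑ m ∈ MF N (X / Nm N (ind S)), (X / ((Nm N (ind S) : ℝ) * Nm N m) - 1)
        + b * ∑ S ∈ (PF N X).powerset, (-1 : ℝ) ^ S.card * cnt N (X / Nm N (ind S)) := by
      rw [i1, i2, mul_one]
    rw [i3, Finset.mul_sum, ← Finset.sum_add_distrib, ← Finset.sum_add_distrib]
    apply Finset.sum_congr rfl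
    intro S _
    simp only [hGdef]
    have : ∑ m ∈ MF N (X / Nm N (ind S)), Real.log (Nm N m)
      = ∑ m ∈ MF N (X / Nm N (ind S)), (X / ((Nm N (ind S) : ℝ) * Nm N m) - 1)
       + ∑ m ∈ MF N (X / Nm N (ind S)), (Real.log (Nm N m) - X / Nm N (ind S) / Nm N m + 1) := by
      rw [← Finset.sum_add_distrib]
      apply Finset.sum_congr rfl
      intro m _
      rw [div_div]; ring
    rw [this]
    ring
  have err : |∑ S ∈ (PF N X).powerset, (-1 : ℝ) ^ S.card * G (X / Nm N (ind S))| ≤ K2 * C2 * X := by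
    refine (Finset.abs_sum_le_sum_abs _ _).trans ?_
    have h1 : ∀ S ∈ (PF N X).powerset, |(-1 : ℝ) ^ S.card * G (X / Nm N (ind S))| ≤
        if ind S ∈ MF N X then K2 * X ^ β * (Nm N (ind S) : ℝ) ^ (-β) else 0 := by
      intro S _
      rw [abs_mul, abs_pow, abs_neg, abs_one, one_pow, one_mul]
      have hp := Nm_pos' hN (ind S)
      split_ifs with h
      · rw [mem_MF hf] at h
        refine (hGb _ ((one_le_div hp).2 h)).trans (le_of_eq ?_)
        rw [Real.div_rpow hX0 hp.le, Real.rpow_neg hp.le]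
        ring
      · rw [mem_MF hf, not_le] at h
        rw [hG0 _ ((div_lt_one hp).2 h), abs_zero]
    refine (Finset.sum_le_sum h1).trans ?_
    rw [← Finset.sum_filter, ← Finset.mul_sum]
    have h2 : ∑ S ∈ (PF N X).powerset with ind S ∈ MF N X, (Nm N (ind S) : ℝ) ^ (-β)
        ≤ ∑ m ∈ MF N X, (Nm N m : ℝ) ^ (-β) := by
      rw [← Finset.sum_image (f := fun m => (Nm N m : ℝ) ^ (-β)) (g := ind) (ind_inj.injOn)]
      apply Finset.sum_le_sum_of_subset_of_nonneg
      · intro m hm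
        obtain ⟨S, hS, rfl⟩ := Finset.mem_image.1 hm
        exact (Finset.mem_filter.1 hS).2
      · intro m _ _; positivity
    calc _ ≤ K2 * X ^ β * (C2 * X ^ (1 - β)) := by
          gcongr
          exact h2.trans (hM X hX0)
      _ = K2 * C2 * (X ^ β * X ^ (1 - β)) := by ring
      _ = _ := by rw [← Real.rpow_add hXpos]; simp
  have h3 := (abs_le.1 err).2
  have h4 : b ≤ |b| * X := by
    have := le_abs_self b
    have := abs_nonneg b
    nlinarith
  rw [ident]
  have : (1 + |b| + K2 * C2) * X = X + |b| * X + K2 * C2 * X := by ring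
  rw [this]
  linarith

lemma psi_dom (hN : ∀ p, 2 ≤ N p) {κ θ : ℝ} (hstar : StarCond N κ θ) {s : ℝ} (hs : 0 ≤ s)
    (hs1 : s < 1) :
    ∃ C : ℝ, 0 ≤ C ∧ ∀ X : ℝ, 0 ≤ X →
      ∑ i ∈ PS N X, Real.log (N i.1) * ((N i.1 : ℝ) ^ i.2) ^ (-s) ≤ C * X ^ (1 - s) := by
  have hf := HFin_of_star hstar
  obtain ⟨C, hC, h⟩ := cheb hN hstar
  have h1 : 0 < 1 - s := by linarith
  refine ⟨C / (1 - s), by positivity, fun X hX => ?_⟩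
  have := dom_sum (PS N X) (fun i => N i.1 ^ i.2) (fun i => Real.log (N i.1)) C
      (fun i _ => Nat.one_le_pow _ _ (by linarith [hN i.1])) (fun k => by
      refine le_trans ?_ (h k (Nat.cast_nonneg k))
      rw [psi]
      apply Finset.sum_le_sum_of_subset_of_nonneg
      · intro i hi
        rw [Finset.mem_filter, mem_PS hN hf] at hi
        rw [mem_PS hN hf]
        exact ⟨hi.1.1, by exact_mod_cast hi.2⟩
      · intro i _ _; exact logN_nonneg _) (fun n => (n : ℝ) ^ (-s))
      (rpow_anti hs) (fun n => by positivity) ⌊X⌋₊ (fun i hi => by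
        rw [mem_PS hN hf] at hi
        exact Nat.le_floor (by exact_mod_cast hi.2))
  push_cast at this
  refine this.trans ?_
  calc _ ≤ C * ((⌊X⌋₊ : ℝ) ^ (1 - s) / (1 - s)) := by gcongr; exact sum_rpow_le hs hs1 _
    _ ≤ C * (X ^ (1 - s) / (1 - s)) := by gcongr; exact Nat.floor_le hX
    _ = _ := by ring

end cheb

end PartP4

section PartP5
section mert
variable {P : Type*} {N : P → ℕ}

lemma Np_pos (hN : ∀ p, 2 ≤ N p) (p : P) : 0 < (N p : ℝ) := by
  exact_mod_cast (by linarith [hN p] : 0 < N p)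

lemma Np_two (hN : ∀ p, 2 ≤ N p) (p : P) : 2 ≤ (N p : ℝ) := by
  exact_mod_cast hN p

lemma geom_le_aux {r : ℝ} (hr0 : 0 ≤ r) (hr : r ≤ 1 / 2) (J : ℕ) :
    ∑ j ∈ Finset.Icc 1 J, r ^ j ≤ r + 2 * r ^ 2 := by
  have h : ∀ J : ℕ, ∑ j ∈ Finset.Icc 1 J, r ^ j * (1 - r) = r - r ^ (J + 1) := by
    intro J
    induction J with
    | zero => simp
    | succ J ih => rw [Finset.sum_Icc_succ_top (by omega), ih]; ring
  have h1 := h J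
  rw [← Finset.sum_mul] at h1
  have h2 : 0 ≤ r ^ (J + 1) := by positivity
  have h3 : r ≤ (r + 2 * r ^ 2) * (1 - r) := by nlinarith [sq_nonneg r, mul_nonneg hr0 (sq_nonneg r)]
  by_contra hcon
  push Not at hcon
  nlinarith

lemma mertens1 (hN : ∀ p, 2 ≤ N p) {κ θ : ℝ} (hstar : StarCond N κ θ) :
    ∃ K : ℝ, 0 ≤ K ∧ ∀ n : ℕ, 1 ≤ n →
      |∑ p ∈ PF N n, Real.log (N p) / N p - Real.log n| ≤ K := by
  have hf := HFin_of_star hstar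
  obtain ⟨hκ, hθ0, hθ1, -⟩ := id hstar
  obtain ⟨C, hC, hb⟩ := cnt_bound hN hstar le_rfl hθ1
  obtain ⟨K1, hT⟩ := T_est (acoef N) κ C θ hθ0 hθ1 hC (fun n hn => by
    have := acoef_sum hN hf n (fun _ => 1)
    simp only [mul_one, Nat.floor_natCast] at this
    rw [this]
    have := hb n (by exact_mod_cast hn)
    simpa [cnt] using this)
  obtain ⟨C2, hC2, hps⟩ := psi_dom hN hstar hθ0 hθ1
  have hsP := summable_P hN hstar (s := 3 / 2) (by norm_num)
  set Z := ∑' p : P, (N p : ℝ) ^ (-(3 / 2 : ℝ)) with hZ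
  have hZ0 : 0 ≤ Z := tsum_nonneg fun p => by positivity
  have hK : 0 ≤ K1 := by
    have := (abs_nonneg _).trans (hT 1 le_rfl)
    simpa using this
  refine ⟨(C * C2 + K1) / κ + 4 * Z, by positivity, fun n hn => ?_⟩
  have hn0 : (0 : ℝ) < n := by exact_mod_cast hn
  set Sg := ∑ i ∈ PS N n, Real.log (N i.1) / (N i.1 : ℝ) ^ i.2 with hSg
  have h1 : |Sg - Real.log n| ≤ (C * C2 + K1) / κ := by
    have t1 := hT n hn
    have e1 := acoef_sum hN hf n (fun k => Real.log k)
    rw [Nat.floor_natCast] at e1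
    rw [e1, T_ident_PS hN hf] at t1
    have t2 : |∑ i ∈ PS N n, Real.log (N i.1) * cnt N (n / (N i.1 : ℝ) ^ i.2) - κ * (n * Sg)|
        ≤ C * C2 * n := by
      rw [hSg, Finset.mul_sum, Finset.mul_sum, ← Finset.sum_sub_distrib]
      refine (Finset.abs_sum_le_sum_abs _ _).trans ?_
      have : ∀ i ∈ PS N n, |Real.log (N i.1) * cnt N (n / (N i.1 : ℝ) ^ i.2)
          - κ * (n * (Real.log (N i.1) / (N i.1 : ℝ) ^ i.2))| ≤
          C * (n : ℝ) ^ θ * (Real.log (N i.1) * ((N i.1 : ℝ) ^ i.2) ^ (-θ)) := by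
        intro i _
        have hp : 0 < (N i.1 : ℝ) ^ i.2 := pow_pos (Np_pos hN _) _
        have hh := hb (n / (N i.1 : ℝ) ^ i.2) (by positivity)
        have e : Real.log (N i.1) * cnt N (n / (N i.1 : ℝ) ^ i.2)
          - κ * (n * (Real.log (N i.1) / (N i.1 : ℝ) ^ i.2)) =
          Real.log (N i.1) * (cnt N (n / (N i.1 : ℝ) ^ i.2) - κ * (n / (N i.1 : ℝ) ^ i.2)) := by ring
        rw [e, abs_mul, abs_of_nonneg (logN_nonneg _)]
        calc _ ≤ Real.log (N i.1) * (C * (n / (N i.1 : ℝ) ^ i.2) ^ θ) := by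
              gcongr
          _ = _ := by rw [Real.div_rpow hn0.le hp.le, Real.rpow_neg hp.le]; ring
      refine (Finset.sum_le_sum this).trans ?_
      rw [← Finset.mul_sum]
      calc _ ≤ C * (n : ℝ) ^ θ * (C2 * (n : ℝ) ^ (1 - θ)) := by gcongr; exact hps n hn0.le
        _ = C * C2 * ((n : ℝ) ^ θ * (n : ℝ) ^ (1 - θ)) := by ring
        _ = _ := by rw [← Real.rpow_add hn0]; simp
    rw [le_div_iff₀ hκ]
    have t3 : |κ * (n * Sg) - κ * (n * Real.log n)| ≤ (C * C2 + K1) * n := by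
      have := abs_sub_le (κ * (n * Sg)) (∑ i ∈ PS N n, Real.log (N i.1) * cnt N (n / (N i.1 : ℝ) ^ i.2))
        (κ * (n * Real.log n))
      rw [abs_sub_comm] at t2
      linarith
    have e : κ * (n * Sg) - κ * (n * Real.log n) = (Sg - Real.log n) * κ * n := by ring
    rw [e, abs_mul, abs_mul, abs_of_pos hκ, abs_of_pos hn0] at t3
    exact le_of_mul_le_mul_right t3 hn0
  have h2 : ∑ p ∈ PF N n, Real.log (N p) / N p ≤ Sg ∧
      Sg ≤ ∑ p ∈ PF N n, Real.log (N p) / N p + 4 * Z := by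
    have e1 : Sg = ∑ p ∈ PF N n, ∑ j ∈ Finset.Icc 1 n, if (N p : ℝ) ^ j ≤ n then
        Real.log (N p) / (N p : ℝ) ^ j else 0 := by
      rw [hSg, PS, Finset.sum_filter, Finset.sum_product, Nat.floor_natCast]
    constructor
    · rw [e1]
      apply Finset.sum_le_sum
      intro p hp
      rw [mem_PF hf] at hp
      have := Finset.single_le_sum (s := Finset.Icc 1 n) (f := fun j => if (N p : ℝ) ^ j ≤ n then
        Real.log (N p) / (N p : ℝ) ^ j else 0) (fun j _ => by
          have := Np_pos hN p
          have := logN_nonneg (N := N) p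
          split_ifs <;> positivity) (Finset.mem_Icc.2 ⟨le_rfl, hn⟩)
      simpa [hp] using this
    · have : ∀ p ∈ PF N n, (∑ j ∈ Finset.Icc 1 n, if (N p : ℝ) ^ j ≤ n then
        Real.log (N p) / (N p : ℝ) ^ j else 0) ≤ Real.log (N p) / N p + 4 * (N p : ℝ) ^ (-(3 / 2 : ℝ)) := by
        intro p _
        have hp := Np_pos hN p
        have hl := logN_nonneg (N := N) p
        calc _ ≤ ∑ j ∈ Finset.Icc 1 n, Real.log (N p) * (1 / (N p : ℝ)) ^ j := by
              apply Finset.sum_le_sum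
              intro j _
              split_ifs
              · rw [one_div, inv_pow, div_eq_mul_inv]
              · positivity
          _ = Real.log (N p) * ∑ j ∈ Finset.Icc 1 n, (1 / (N p : ℝ)) ^ j := by rw [Finset.mul_sum]
          _ ≤ Real.log (N p) * (1 / (N p : ℝ) + 2 * (1 / (N p : ℝ)) ^ 2) := by
              gcongr
              apply geom_le_aux (by positivity)
              exact one_div_le_one_div_of_le (by norm_num) (Np_two hN p)
          _ = Real.log (N p) / N p + 2 * Real.log (N p) * (1 / (N p : ℝ)) ^ 2 := by ring
          _ ≤ Real.log (N p) / N p + 2 * ((N p : ℝ) ^ (1 / 2 : ℝ) / (1 / 2)) * (1 / (N p : ℝ)) ^ 2 := by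
              gcongr
              exact Real.log_le_rpow_div hp.le (by norm_num)
          _ = _ := by
              congr 1
              have : (1 / (N p : ℝ)) ^ 2 = (N p : ℝ) ^ (-2 : ℝ) := by
                rw [Real.rpow_neg hp.le]; norm_num
              have e3 : (N p : ℝ) ^ (-(3 / 2 : ℝ)) = (N p : ℝ) ^ (1 / 2 : ℝ) * (N p : ℝ) ^ (-2 : ℝ) := by
                rw [← Real.rpow_add hp]; norm_num
              rw [this, e3]; ring
      rw [e1]
      refine (Finset.sum_le_sum this).trans ?_
      rw [Finset.sum_add_distrib, ← Finset.mul_sum]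
      gcongr
      exact hsP.sum_le_tsum _ (fun p _ => by positivity)
  rw [abs_le] at h1 ⊢
  have : 0 ≤ (C * C2 + K1) / κ := by positivity
  constructor <;> linarith [h1.1, h1.2, h2.1, h2.2]

lemma prime_pow_sum (hN : ∀ p, 2 ≤ N p) {κ θ : ℝ} (hstar : StarCond N κ θ) {s : ℝ} (hs : 0 ≤ s)
    (hs1 : s < 1) :
    ∃ C : ℝ, 0 ≤ C ∧ ∀ X : ℝ, 1 < X →
      ∑ p ∈ PF N X, (N p : ℝ) ^ (-s) ≤ C * (X ^ (1 - s) / Real.log X) := by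
  have hf := HFin_of_star hstar
  obtain ⟨C1, hC1, h1⟩ := sumM_lt hN hstar hs hs1
  obtain ⟨C2, hC2, h2⟩ := psi_dom hN hstar hs hs1
  have hd : 0 < (1 - s) / 2 := by linarith
  refine ⟨C1 / ((1 - s) / 2) + 2 * C2, by positivity, fun X hX => ?_⟩
  have hX0 : 0 < X := by linarith
  have hL : 0 < Real.log X := Real.log_pos hX
  set Y := X ^ (1 / 2 : ℝ) with hY
  have hY0 : 0 < Y := by positivity
  rw [← Finset.sum_filter_add_sum_filter_not (PF N X) (fun p => (N p : ℝ) ≤ Y)]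
  have a1 : ∑ p ∈ PF N X with (N p : ℝ) ≤ Y, (N p : ℝ) ^ (-s) ≤
      C1 / ((1 - s) / 2) * (X ^ (1 - s) / Real.log X) := by
    have : ∑ p ∈ PF N X with (N p : ℝ) ≤ Y, (N p : ℝ) ^ (-s) ≤ ∑ m ∈ MF N Y, (Nm N m : ℝ) ^ (-s) := by
      have e : ∑ p ∈ PF N X with (N p : ℝ) ≤ Y, (N p : ℝ) ^ (-s)
          = ∑ m ∈ (((PF N X).filter (fun p => (N p : ℝ) ≤ Y)).image (fun p => Finsupp.single p 1)),
            (Nm N m : ℝ) ^ (-s) := by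
        rw [Finset.sum_image ((Finsupp.single_left_injective one_ne_zero).injOn)]
        simp [Nm_single]
      rw [e]
      apply Finset.sum_le_sum_of_subset_of_nonneg
      · intro m hm
        obtain ⟨p, hp, rfl⟩ := Finset.mem_image.1 hm
        rw [mem_MF hf, Nm_single, pow_one]
        exact (Finset.mem_filter.1 hp).2
      · intro m _ _; positivity
    refine this.trans ((h1 Y hY0.le).trans ?_)
    rw [hY, ← Real.rpow_mul hX0.le]
    have e2 : (1 / 2 : ℝ) * (1 - s) = (1 - s) / 2 := by ring
    rw [e2]
    have hl : Real.log X ≤ X ^ ((1 - s) / 2) / ((1 - s) / 2) := Real.log_le_rpow_div hX0.le hd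
    have e3 : X ^ (1 - s) = X ^ ((1 - s) / 2) * X ^ ((1 - s) / 2) := by
      rw [← Real.rpow_add hX0]; ring_nf
    rw [e3, ← mul_div_assoc, le_div_iff₀ hL]
    calc _ ≤ C1 * X ^ ((1 - s) / 2) * (X ^ ((1 - s) / 2) / ((1 - s) / 2)) := by gcongr
      _ = _ := by ring
  have a2 : ∑ p ∈ PF N X with ¬ (N p : ℝ) ≤ Y, (N p : ℝ) ^ (-s) ≤
      2 * C2 * (X ^ (1 - s) / Real.log X) := by
    have b1 : ∀ p ∈ (PF N X).filter (fun p => ¬ (N p : ℝ) ≤ Y), (N p : ℝ) ^ (-s) ≤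
        2 / Real.log X * (Real.log (N p) * ((N p : ℝ) ^ 1) ^ (-s)) := by
      intro p hp
      have := (Finset.mem_filter.1 hp).2
      rw [not_le] at this
      have hl : Real.log Y ≤ Real.log (N p) := Real.log_le_log hY0 this.le
      rw [hY, Real.log_rpow hX0] at hl
      have hp0 := Np_pos hN p
      have h3 : 1 ≤ 2 / Real.log X * Real.log (N p) := by
        rw [div_mul_eq_mul_div, le_div_iff₀ hL]; linarith
      rw [pow_one, ← mul_assoc]
      exact le_mul_of_one_le_left (by positivity) h3
    refine (Finset.sum_le_sum b1).trans ?_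
    rw [← Finset.mul_sum]
    have b2 : ∑ p ∈ PF N X with ¬ (N p : ℝ) ≤ Y, (Real.log (N p) * ((N p : ℝ) ^ 1) ^ (-s))
        ≤ ∑ i ∈ PS N X, Real.log (N i.1) * ((N i.1 : ℝ) ^ i.2) ^ (-s) := by
      have hinj : Function.Injective (fun p : P => (p, (1 : ℕ))) := by
        intro p q h; simpa using h
      have e := Finset.sum_image (s := (PF N X).filter (fun p => ¬ (N p : ℝ) ≤ Y))
        (f := fun i : P × ℕ => Real.log (N i.1) * ((N i.1 : ℝ) ^ i.2) ^ (-s)) hinj.injOn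
      simp only at e
      rw [← e]
      apply Finset.sum_le_sum_of_subset_of_nonneg
      · intro m hm
        obtain ⟨p, hp, rfl⟩ := Finset.mem_image.1 hm
        rw [mem_PS hN hf]
        have := (Finset.mem_filter.1 hp).1
        rw [mem_PF hf] at this
        simpa using this
      · intro i _ _
        have := logN_nonneg (N := N) i.1
        positivity
    calc _ ≤ 2 / Real.log X * (C2 * X ^ (1 - s)) := by gcongr; exact b2.trans (h2 X hX0.le)
      _ = _ := by ring
  rw [add_mul]
  linarith

lemma PF_nat_succ (hf : HFin N) (n : ℕ) (f : ℕ → ℝ) :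
    ∑ p ∈ PF N ((n + 1 : ℕ) : ℝ), f (N p) = ∑ p ∈ PF N (n : ℝ), f (N p)
      + (((PF N ((n + 1 : ℕ) : ℝ)).filter (fun p => N p = n + 1)).card : ℝ) * f (n + 1) := by
  rw [← Finset.sum_filter_add_sum_filter_not (PF N ((n + 1 : ℕ) : ℝ)) (fun p => N p ≤ n)]
  congr 1
  · congr 1
    ext p
    simp only [Finset.mem_filter, mem_PF hf, Nat.cast_le]
    omega
  · rw [← nsmul_eq_mul, ← Finset.sum_const]
    apply Finset.sum_congr
    · ext p
      simp only [Finset.mem_filter, mem_PF hf, Nat.cast_le]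
      omega
    · intro p hp
      rw [Finset.mem_filter] at hp
      rw [hp.2]

lemma mertens2_nat (hN : ∀ p, 2 ≤ N p) {κ θ : ℝ} (hstar : StarCond N κ θ)
    {A : ℝ} (hA : IsMertens N A) :
    ∃ K : ℝ, 0 ≤ K ∧ ∀ n : ℕ, 2 ≤ n →
      |∑ p ∈ PF N n, 1 / (N p : ℝ) - Real.log (Real.log n) - A| ≤ K / Real.log n := by
  have hf := HFin_of_star hstar
  obtain ⟨K, hK, hm⟩ := mertens1 hN hstar
  set B : ℕ → ℝ := fun n => ∑ p ∈ PF N n, Real.log (N p) / N p with hB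
  set v : ℕ → ℝ := fun n => ∑ p ∈ PF N n, 1 / (N p : ℝ) - Real.log (Real.log n) with hv
  have htl : Tendsto (fun n : ℕ => 1 / Real.log (((n + 1 : ℕ) : ℝ))) atTop (𝓝 0) := by
    have h1 : Tendsto (fun n : ℕ => Real.log (((n + 1 : ℕ) : ℝ))) atTop atTop :=
      Real.tendsto_log_atTop.comp (tendsto_natCast_atTop_atTop.comp (tendsto_add_atTop_nat 1))
    refine h1.inv_tendsto_atTop.congr (fun n => ?_)
    simp
  obtain ⟨c, hc⟩ := tele_lim (fun n => v (n + 1) - (B (n + 1) - Real.log ((n + 1 : ℕ) : ℝ)) / Real.log ((n + 1 : ℕ) : ℝ))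
    (fun n => 1 / Real.log (((n + 1 : ℕ) : ℝ))) (K + 1) htl (by
    intro n hn
    have hR := hm (n + 1) (by omega)
    have s1 := PF_nat_succ hf (n + 1) (fun k => 1 / (k : ℝ))
    have s2 := PF_nat_succ hf (n + 1) (fun k => Real.log k / (k : ℝ))
    have hn1 : (0 : ℝ) < ((n + 1 : ℕ) : ℝ) := by positivity
    have hn2 : (1 : ℝ) ≤ ((n + 1 : ℕ) : ℝ) := by push_cast; linarith [(Nat.cast_nonneg n : (0 : ℝ) ≤ n)]
    have hn3 : (1 : ℝ) < ((n + 1 : ℕ) : ℝ) := by exact_mod_cast (by omega : 1 < n + 1)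
    have hLl : Real.log (((n + 1 + 1 : ℕ) : ℝ)) - Real.log (((n + 1 : ℕ) : ℝ)) ≤ 1 := by
      rw [← Real.log_div (by positivity) (by positivity)]
      refine (Real.log_le_sub_one_of_pos (by positivity)).trans ?_
      rw [sub_le_iff_le_add, div_le_iff₀ hn1]
      push_cast at hn2 ⊢
      linarith
    have hlL : Real.log (((n + 1 : ℕ) : ℝ)) ≤ Real.log (((n + 1 + 1 : ℕ) : ℝ)) :=
      Real.log_le_log hn1 (by push_cast; linarith)
    have hl0 : 0 < Real.log (((n + 1 : ℕ) : ℝ)) := Real.log_pos hn3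
    simp only [hv, hB]
    change |∑ p ∈ PF N ((n + 1 : ℕ) : ℝ), Real.log (N p) / N p - _| ≤ K at hR
    rw [s1, s2]
    set l := Real.log (((n + 1 : ℕ) : ℝ))
    set L := Real.log (((n + 1 + 1 : ℕ) : ℝ))
    have hL0 : 0 < L := by linarith
    set b := ∑ p ∈ PF N ((n + 1 : ℕ) : ℝ), Real.log (N p) / N p
    set a := ∑ p ∈ PF N ((n + 1 : ℕ) : ℝ), 1 / (N p : ℝ)
    set k := (((PF N ((n + 1 + 1 : ℕ) : ℝ)).filter (fun p => N p = n + 1 + 1)).card : ℝ)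
    have q0 : ((n + 1 + 1 : ℕ) : ℝ) ≠ 0 := by positivity
    set q := ((n + 1 + 1 : ℕ) : ℝ)
    have e : a + k * (1 / q) - Real.log L - (b + k * (L / q) - L) / L - (a - Real.log l - (b - l) / l)
      = (b - l) * (1 / l - 1 / L) + (1 - l / L - (Real.log L - Real.log l)) := by
      field_simp
      ring
    rw [e]
    have g1 : 1 - l / L ≤ Real.log L - Real.log l := by
      rw [← Real.log_div hL0.ne' hl0.ne']
      have := Real.one_sub_inv_le_log_of_pos (div_pos hL0 hl0)
      rwa [inv_div] at this
    have g2 : Real.log L - Real.log l ≤ L / l - 1 := by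
      rw [← Real.log_div hL0.ne' hl0.ne']
      exact Real.log_le_sub_one_of_pos (div_pos hL0 hl0)
    have g3 : 0 ≤ 1 / l - 1 / L := by
      rw [sub_nonneg]; exact one_div_le_one_div_of_le hl0 hlL
    have g4 : L / l - 1 - (1 - l / L) = (L - l) * (1 / l - 1 / L) := by field_simp
    have g5 : (L - l) * (1 / l - 1 / L) ≤ 1 * (1 / l - 1 / L) := by gcongr
    refine (abs_add_le _ _).trans ?_
    rw [abs_mul, abs_of_nonneg g3, add_mul]
    apply add_le_add
    · gcongr
    · rw [abs_le]; constructor <;> linarith)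
  have hb : ∀ n : ℕ, 2 ≤ n → |v n - c| ≤ (2 * K + 1) / Real.log n := by
    intro n hn
    obtain ⟨k, rfl⟩ := Nat.exists_eq_add_of_le hn
    have h1 := hc (k + 1) (by omega)
    rw [show k + 1 + 1 = 2 + k by ring] at h1
    have h2 := hm (2 + k) (by omega)
    have hl0 : 0 < Real.log (((2 + k : ℕ) : ℝ)) := Real.log_pos (by exact_mod_cast (by omega : 1 < 2 + k))
    have h3 : |(B (2 + k) - Real.log ((2 + k : ℕ) : ℝ)) / Real.log ((2 + k : ℕ) : ℝ)| ≤ K / Real.log ((2 + k : ℕ) : ℝ) := by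
      rw [abs_div, abs_of_pos hl0]; gcongr
    have h4 := abs_add_le (v (2 + k) - (B (2 + k) - Real.log ((2 + k : ℕ) : ℝ)) / Real.log ((2 + k : ℕ) : ℝ) - c)
      ((B (2 + k) - Real.log ((2 + k : ℕ) : ℝ)) / Real.log ((2 + k : ℕ) : ℝ))
    have e1 : v (2 + k) - (B (2 + k) - Real.log ((2 + k : ℕ) : ℝ)) / Real.log ((2 + k : ℕ) : ℝ) - c +
      (B (2 + k) - Real.log ((2 + k : ℕ) : ℝ)) / Real.log ((2 + k : ℕ) : ℝ) = v (2 + k) - c := by ring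
    rw [e1] at h4
    have e2 : (2 * K + 1) / Real.log ((2 + k : ℕ) : ℝ) = (K + 1) * (1 / Real.log ((2 + k : ℕ) : ℝ)) + K / Real.log ((2 + k : ℕ) : ℝ) := by ring
    rw [e2]
    linarith
  have hvA : Tendsto v atTop (𝓝 A) := by
    have := hA.comp (tendsto_natCast_atTop_atTop (R := ℝ))
    refine this.congr (fun n => ?_)
    simp only [Function.comp, hv]
    congr 1
    rw [← finsum_mem_coe_finset]
    congr 1
    ext p
    have : p ∈ PF N n ↔ (N p : ℝ) ≤ n := mem_PF hf
    simp [this]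
  have hvc : Tendsto v atTop (𝓝 c) := by
    rw [← tendsto_add_atTop_iff_nat 2, tendsto_iff_norm_sub_tendsto_zero]
    have h0 : Tendsto (fun n : ℕ => (2 * K + 1) * (1 / Real.log (((n + 2 : ℕ) : ℝ)))) atTop (𝓝 0) := by
      have h := ((tendsto_add_atTop_iff_nat 1).2 htl).const_mul (2 * K + 1)
      rw [mul_zero] at h
      exact h
    refine squeeze_zero (fun n => norm_nonneg _) (fun n => ?_) h0
    rw [Real.norm_eq_abs]
    have := hb (n + 2) (by omega)
    rwa [div_eq_mul_one_div] at this
  have := tendsto_nhds_unique hvA hvc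
  subst this
  exact ⟨2 * K + 1, by positivity, hb⟩

lemma mertens2 (hN : ∀ p, 2 ≤ N p) {κ θ : ℝ} (hstar : StarCond N κ θ)
    {A : ℝ} (hA : IsMertens N A) :
    ∃ K : ℝ, 0 ≤ K ∧ ∀ y : ℝ, 2 ≤ y →
      |∑ p ∈ PF N y, 1 / (N p : ℝ) - Real.log (Real.log y) - A| ≤ K / Real.log y := by
  have hf := HFin_of_star hstar
  obtain ⟨K, hK, hm⟩ := mertens2_nat hN hstar hA
  refine ⟨2 * (K + 1), by positivity, fun y hy => ?_⟩
  have hy0 : 0 < y := by linarith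
  set n := ⌊y⌋₊ with hn
  have hn2 : 2 ≤ n := Nat.le_floor (by exact_mod_cast hy)
  have hn2' : (2 : ℝ) ≤ n := by exact_mod_cast hn2
  have hny : (n : ℝ) ≤ y := Nat.floor_le hy0.le
  have hyn : y < n + 1 := Nat.lt_floor_add_one y
  have hPF : PF N y = PF N (n : ℝ) := by
    ext p
    rw [mem_PF hf, mem_PF hf, Nat.cast_le]
    exact (Nat.le_floor_iff hy0.le).symm
  have hl : 0 < Real.log n := Real.log_pos (by linarith)
  have hL : 0 < Real.log y := Real.log_pos (by linarith)
  have h1 : Real.log y ≤ 2 * Real.log n := by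
    rw [← Real.log_rpow (by linarith)]
    apply Real.log_le_log hy0
    norm_num
    nlinarith
  have h2 : Real.log y - Real.log n ≤ 1 := by
    rw [← Real.log_div (by positivity) (by positivity)]
    refine (Real.log_le_sub_one_of_pos (by positivity)).trans ?_
    rw [sub_le_iff_le_add, div_le_iff₀ (by positivity)]
    linarith
  have h3 : Real.log (Real.log y) - Real.log (Real.log n) ≤ 1 / Real.log n := by
    rw [← Real.log_div hL.ne' hl.ne']
    refine (Real.log_le_sub_one_of_pos (by positivity)).trans ?_
    rw [sub_le_iff_le_add, div_le_iff₀ hl, add_mul, div_mul_cancel₀ _ hl.ne']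
    linarith
  have h4 : Real.log (Real.log n) ≤ Real.log (Real.log y) :=
    Real.log_le_log hl (Real.log_le_log (by linarith) hny)
  have h5 := hm n hn2
  rw [hPF]
  have h6 : (K + 1) / Real.log n ≤ 2 * (K + 1) / Real.log y := by
    rw [div_le_div_iff₀ hl hL]
    nlinarith
  rw [add_div] at h6
  rw [abs_le] at h5 ⊢
  have : 0 ≤ 1 / Real.log n := by positivity
  constructor <;> linarith [h5.1, h5.2]

end mert

end PartP5

section PartP6a
lemma rpow_Nm {P : Type*} {N : P → ℕ} (s : ℝ) (b : P →₀ ℕ) (S : Finset P) (hS : b.support ⊆ S) :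
    (Nm N b : ℝ) ^ s = ∏ p ∈ S, ((N p : ℝ) ^ (b p)) ^ s := by
  unfold Nm
  rw [Finsupp.prod_of_support_subset b hS _ (by simp)]
  push_cast
  rw [Real.finsetProd_rpow _ _ (fun i _ => by positivity)]

lemma euler_fin {P : Type*} {N : P → ℕ} (s : ℝ) (S : Finset P) (T : P → Finset ℕ) :
    ∑ b ∈ S.finsupp T, (Nm N b : ℝ) ^ (-s) = ∏ p ∈ S, ∑ j ∈ T p, ((N p : ℝ) ^ j) ^ (-s) := by
  rw [Finset.prod_sum]
  unfold Finset.finsupp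
  rw [Finset.sum_map]
  refine Finset.sum_congr rfl fun f hf => ?_
  simp only [Function.Embedding.coeFn_mk]
  rw [rpow_Nm (-s) _ S (Finsupp.support_indicator_subset _ _), ← Finset.prod_attach]
  refine Finset.prod_congr rfl fun p _ => ?_
  rw [Finsupp.indicator_of_mem p.2]

def BT {P : Type*} (T : P → Finset ℕ) : Set (P →₀ ℕ) := {b | ∀ p, b p ∈ T p}

lemma euler {P : Type*} {N : P → ℕ} (s : ℝ) (T : P → Finset ℕ)
    (h0 : ∀ p, 0 ∈ T p) (F : P → ℝ) (hF0 : ∀ p, 0 ≤ F p)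
    (hF : ∀ p, ∑ j ∈ T p, ((N p : ℝ) ^ j) ^ (-s) = 1 + F p) (hFs : Summable F) :
    HasSum (fun b : P →₀ ℕ => if b ∈ BT T then (Nm N b : ℝ) ^ (-s) else 0) (∏' p, (1 + F p)) := by
  have hmul : Multipliable (fun p => 1 + F p) := Real.multipliable_one_add_of_summable hFs
  have hfin : ∀ S : Finset P, ∑ b ∈ S.finsupp T,
      (if b ∈ BT T then (Nm N b : ℝ) ^ (-s) else 0) = ∏ p ∈ S, (1 + F p) := by
    intro S
    rw [Finset.prod_congr rfl (fun p _ => (hF p).symm), ← euler_fin]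
    refine Finset.sum_congr rfl fun b hb => ?_
    rw [if_pos]
    intro p
    rw [Finset.mem_finsupp_iff] at hb
    by_cases hp : p ∈ S
    · exact hb.2 p hp
    · have : b p = 0 := by
        by_contra hc
        exact hp (hb.1 (Finsupp.mem_support_iff.2 hc))
      rw [this]; exact h0 p
  have hle : ∀ S : Finset P, ∏ p ∈ S, (1 + F p) ≤ ∏' p, (1 + F p) := by
    intro S
    refine ge_of_tendsto hmul.hasProd ?_
    filter_upwards [eventually_ge_atTop S] with S' hS'
    rw [← Finset.prod_sdiff hS']
    have h1 : (1 : ℝ) ≤ ∏ p ∈ S' \ S, (1 + F p) := by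
      calc (1 : ℝ) = ∏ p ∈ S' \ S, (1 : ℝ) := by simp
        _ ≤ _ := Finset.prod_le_prod (fun _ _ => zero_le_one) (fun i _ => by linarith [hF0 i])
    have h2 : (0 : ℝ) ≤ ∏ p ∈ S, (1 + F p) := Finset.prod_nonneg (fun i _ => by linarith [hF0 i])
    nlinarith
  refine hasSum_of_isLUB_of_nonneg _ (fun b => by split_ifs <;> positivity) ⟨?_, ?_⟩
  · rintro _ ⟨U, rfl⟩
    set S := U.biUnion (fun b => b.support)
    refine le_trans ?_ (hle S)
    rw [← hfin S]
    dsimp only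
    rw [← Finset.sum_filter]
    have : U.filter (fun b => b ∈ BT T) ⊆ S.finsupp T := by
      intro b hb
      rw [Finset.mem_filter] at hb
      rw [Finset.mem_finsupp_iff]
      exact ⟨fun p hp => Finset.mem_biUnion.2 ⟨b, hb.1, hp⟩, fun p _ => hb.2 p⟩
    rw [Finset.sum_filter]
    calc _ = ∑ b ∈ U.filter (fun b => b ∈ BT T), (if b ∈ BT T then (Nm N b : ℝ) ^ (-s) else 0) := by
          rw [Finset.sum_filter]
          exact Finset.sum_congr rfl fun b _ => by split_ifs <;> rfl
      _ ≤ _ := Finset.sum_le_sum_of_subset_of_nonneg this (fun b _ _ => by split_ifs <;> positivity)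
  · intro c hc
    refine le_of_tendsto hmul.hasProd (Eventually.of_forall fun S => ?_)
    rw [← hfin S]
    exact hc ⟨_, rfl⟩

/-- exponents -/
def TB (h : ℕ) : Finset ℕ := insert 0 (Finset.Icc (h + 1) (2 * h - 1))

def fB {P : Type*} (N : P → ℕ) (h : ℕ) (s : ℝ) (p : P) : ℝ :=
  ∑ j ∈ Finset.Icc (h + 1) (2 * h - 1), ((N p : ℝ) ^ j) ^ (-s)

def ZB {P : Type*} (N : P → ℕ) (h : ℕ) (s : ℝ) : ℝ := ∏' p, (1 + fB N h s p)
def ZBp {P : Type*} (N : P → ℕ) (h : ℕ) (s : ℝ) (p : P) : ℝ :=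
  ∏' q, (if q = p then 1 else (1 + fB N h s q))

def BB {P : Type*} (h : ℕ) : Set (P →₀ ℕ) := BT (fun _ => TB h)

lemma mem_BB {P : Type*} {h : ℕ} {b : P →₀ ℕ} :
    b ∈ BB h ↔ ∀ p, b p = 0 ∨ (h + 1 ≤ b p ∧ b p ≤ 2 * h - 1) := by
  simp [BB, BT, TB]

lemma fB_nonneg {P : Type*} {N : P → ℕ} {h : ℕ} {s : ℝ} (p : P) : 0 ≤ fB N h s p :=
  Finset.sum_nonneg fun _ _ => by positivity

lemma fB_le {P : Type*} {N : P → ℕ} (hN : ∀ p, 2 ≤ N p) {h : ℕ} (hh : 2 ≤ h) {s : ℝ} (hs : 0 ≤ s)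
    (p : P) : fB N h s p ≤ (h - 1) * (N p : ℝ) ^ (-((h + 1) * s)) := by
  have hp := Np_pos hN p
  have hp2 := Np_two hN p
  unfold fB
  calc _ ≤ ∑ j ∈ Finset.Icc (h + 1) (2 * h - 1), (N p : ℝ) ^ (-((h + 1) * s)) := by
        refine Finset.sum_le_sum fun j hj => ?_
        rw [Finset.mem_Icc] at hj
        rw [← Real.rpow_natCast, ← Real.rpow_mul hp.le]
        apply Real.rpow_le_rpow_of_exponent_le (by linarith)
        have : (h : ℝ) + 1 ≤ j := by exact_mod_cast hj.1
        nlinarith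
    _ = _ := by
        rw [Finset.sum_const, Nat.card_Icc, nsmul_eq_mul]
        congr 1
        have : 2 * h - 1 + 1 - (h + 1) = h - 1 := by omega
        rw [this, Nat.cast_sub (by omega)]; simp

lemma fB_summable {P : Type*} {N : P → ℕ} (hN : ∀ p, 2 ≤ N p) {κ θ : ℝ} (hstar : StarCond N κ θ)
    {h : ℕ} (hh : 2 ≤ h) {s : ℝ} (hs : 0 ≤ s) (hs1 : 1 < (h + 1) * s) : Summable (fB N h s) :=
  Summable.of_nonneg_of_le (fun p => fB_nonneg p) (fun p => fB_le hN hh hs p)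
    ((summable_P hN hstar hs1).mul_left _)

lemma TB_sum {P : Type*} {N : P → ℕ} {h : ℕ} {s : ℝ} (p : P) :
    ∑ j ∈ TB h, ((N p : ℝ) ^ j) ^ (-s) = 1 + fB N h s p := by
  unfold TB fB
  rw [Finset.sum_insert (by simp)]
  simp

lemma ZB_hasSum {P : Type*} {N : P → ℕ} (hN : ∀ p, 2 ≤ N p) {κ θ : ℝ} (hstar : StarCond N κ θ)
    {h : ℕ} (hh : 2 ≤ h) {s : ℝ} (hs : 0 ≤ s) (hs1 : 1 < (h + 1) * s) :
    HasSum (fun b : P →₀ ℕ => if b ∈ BB h then (Nm N b : ℝ) ^ (-s) else 0) (ZB N h s) :=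
  euler s _ (fun _ => by simp [TB]) (fB N h s) fB_nonneg TB_sum (fB_summable hN hstar hh hs hs1)

lemma ZBp_hasSum {P : Type*} {N : P → ℕ} (hN : ∀ p, 2 ≤ N p) {κ θ : ℝ} (hstar : StarCond N κ θ)
    {h : ℕ} (hh : 2 ≤ h) {s : ℝ} (hs : 0 ≤ s) (hs1 : 1 < (h + 1) * s) (p : P) :
    HasSum (fun b : P →₀ ℕ => if b ∈ BB h ∧ b p = 0 then (Nm N b : ℝ) ^ (-s) else 0)
      (ZBp N h s p) := by
  have := euler (N := N) s (fun q => if q = p then {0} else TB h) (fun q => by split_ifs <;> simp [TB])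
    (fun q => if q = p then 0 else fB N h s q) (fun q => by split_ifs; exacts [le_rfl, fB_nonneg q])
    (fun q => by
      split_ifs
      · simp
      · exact TB_sum q)
    (Summable.of_nonneg_of_le (fun q => by split_ifs; exacts [le_rfl, fB_nonneg q])
      (fun q => by split_ifs; exacts [fB_nonneg q, le_rfl]) (fB_summable hN hstar hh hs hs1))
  have e1 : (∏' q, (1 + (if q = p then 0 else fB N h s q))) = ZBp N h s p := by
    unfold ZBp
    congr 1; ext q; split_ifs <;> simp
  rw [e1] at this
  convert this using 2 with b
  have : (b ∈ BB h ∧ b p = 0) ↔ b ∈ BT (fun q => if q = p then {0} else TB h) := by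
    constructor
    · rintro ⟨h1, h2⟩ q
      dsimp only
      split_ifs with hq
      · rw [hq, h2]; simp
      · exact h1 q
    · intro h1
      have h2 : b p = 0 := by have := h1 p; simpa using this
      refine ⟨fun q => ?_, h2⟩
      by_cases hq : q = p
      · rw [hq, h2]; simp [TB]
      · have := h1 q
        simpa [hq] using this
  simp only [this]

lemma ZB_split {P : Type*} {N : P → ℕ} (hN : ∀ p, 2 ≤ N p) {κ θ : ℝ} (hstar : StarCond N κ θ)
    {h : ℕ} (hh : 2 ≤ h) {s : ℝ} (hs : 0 ≤ s) (hs1 : 1 < (h + 1) * s) (p : P) :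
    ZB N h s = (1 + fB N h s p) * ZBp N h s p := by
  unfold ZB ZBp
  have hm : Multipliable (Function.update (fun q => 1 + fB N h s q) p 1) := by
    have : (Function.update (fun q => 1 + fB N h s q) p 1) =
        fun q => 1 + (if q = p then 0 else fB N h s q) := by
      ext q; by_cases hq : q = p
      · subst hq; simp
      · simp [hq]
    rw [this]
    apply Real.multipliable_one_add_of_summable
    exact (Summable.of_nonneg_of_le (fun q => by split_ifs; exacts [le_rfl, fB_nonneg q])
      (fun q => by split_ifs; exacts [fB_nonneg q, le_rfl]) (fB_summable hN hstar hh hs hs1))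
  exact Multipliable.tprod_eq_mul_tprod_ite' p hm

lemma ZBp_nonneg {P : Type*} {N : P → ℕ} (hN : ∀ p, 2 ≤ N p) {κ θ : ℝ} (hstar : StarCond N κ θ)
    {h : ℕ} (hh : 2 ≤ h) {s : ℝ} (hs : 0 ≤ s) (hs1 : 1 < (h + 1) * s) (p : P) :
    0 ≤ ZBp N h s p :=
  (ZBp_hasSum hN hstar hh hs hs1 p).nonneg (fun b => by split_ifs <;> positivity)

lemma ZBp_le {P : Type*} {N : P → ℕ} (hN : ∀ p, 2 ≤ N p) {κ θ : ℝ} (hstar : StarCond N κ θ)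
    {h : ℕ} (hh : 2 ≤ h) {s : ℝ} (hs : 0 ≤ s) (hs1 : 1 < (h + 1) * s) (p : P) :
    ZBp N h s p ≤ ZB N h s := by
  rw [ZB_split hN hstar hh hs hs1 p]
  nlinarith [ZBp_nonneg hN hstar hh hs hs1 p, fB_nonneg (N := N) (h := h) (s := s) p]

/-- weight of b relative to p -/
def wB {P : Type*} (N : P → ℕ) (p : P) (b : P →₀ ℕ) : ℝ := if b p = 0 then 1 / (N p : ℝ) else 1

lemma w_hasSum {P : Type*} {N : P → ℕ} (hN : ∀ p, 2 ≤ N p) {κ θ : ℝ} (hstar : StarCond N κ θ)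
    {h : ℕ} (hh : 2 ≤ h) {s : ℝ} (hs : 0 ≤ s) (hs1 : 1 < (h + 1) * s) (p : P) (α : ℝ) :
    HasSum (fun b : P →₀ ℕ => if b ∈ BB h then wB N p b ^ α * (Nm N b : ℝ) ^ (-s) else 0)
      (ZB N h s - (1 - (1 / (N p : ℝ)) ^ α) * ZBp N h s p) := by
  have := (ZB_hasSum hN hstar hh hs hs1).sub
    ((ZBp_hasSum hN hstar hh hs hs1 p).mul_left (1 - (1 / (N p : ℝ)) ^ α))
  refine this.congr_fun ?_
  intro b
  unfold wB
  by_cases h1 : b ∈ BB h <;> by_cases h2 : b p = 0 <;> simp [h1, h2]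
  ring

lemma w_bound {P : Type*} {N : P → ℕ} (hN : ∀ p, 2 ≤ N p) {κ θ : ℝ} (hstar : StarCond N κ θ)
    {h : ℕ} (hh : 2 ≤ h) {α : ℝ} (hs : 0 ≤ α) (hs1 : 1 < (h + 1) * (α / h)) (p : P) :
    ZB N h (α / h) - (1 - (1 / (N p : ℝ)) ^ α) * ZBp N h (α / h) p
      ≤ h * ZB N h (α / h) * (N p : ℝ) ^ (-α) := by
  have hp := Np_pos hN p
  have hp2 := Np_two hN p
  have hh0 : (0 : ℝ) < h := by positivity
  have hs' : 0 ≤ α / h := by positivity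
  have h1 := ZBp_nonneg hN hstar hh hs' hs1 p
  have h2 := ZBp_le hN hstar hh hs' hs1 p
  have h3 := fB_le hN hh hs' p
  have h4 : (N p : ℝ) ^ (-((h + 1) * (α / h))) ≤ (N p : ℝ) ^ (-α) := by
    apply Real.rpow_le_rpow_of_exponent_le (by linarith)
    have : (h + 1) * (α / h) = α + α / h := by field_simp
    rw [this]; linarith
  have h5 : (1 / (N p : ℝ)) ^ α = (N p : ℝ) ^ (-α) := by
    rw [Real.rpow_neg hp.le, one_div, Real.inv_rpow hp.le]
  rw [h5]
  have h6 : (1 : ℝ) ≤ h := by exact_mod_cast (by omega : 1 ≤ h)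
  have h7 : fB N h (α / h) p ≤ (h - 1) * (N p : ℝ) ^ (-α) :=
    h3.trans (mul_le_mul_of_nonneg_left h4 (by linarith))
  have h8 : (0 : ℝ) < (N p : ℝ) ^ (-α) := by positivity
  calc _ = (fB N h (α / h) p + (N p : ℝ) ^ (-α)) * ZBp N h (α / h) p := by
        rw [ZB_split hN hstar hh hs' hs1 p]; ring
    _ ≤ (h * (N p : ℝ) ^ (-α)) * ZBp N h (α / h) p := by
        gcongr; linarith
    _ ≤ (h * (N p : ℝ) ^ (-α)) * ZB N h (α / h) := by gcongr
    _ = _ := by ring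

end PartP6a

section PartP6
lemma aroot {P : Type*} {N : P → ℕ} (hN : ∀ p, 2 ≤ N p) {h : ℕ} (hh : 2 ≤ h) (p : P) :
    1 < (N p : ℝ) ^ (1 / (h : ℝ)) ∧ ((N p : ℝ) ^ (1 / (h : ℝ))) ^ h = N p := by
  have hp := Np_pos hN p
  have hp2 := Np_two hN p
  have hh0 : (0 : ℝ) < h := by positivity
  refine ⟨Real.one_lt_rpow (by linarith) (by positivity), ?_⟩
  rw [← Real.rpow_natCast, ← Real.rpow_mul hp.le]
  rw [one_div, inv_mul_cancel₀ hh0.ne', Real.rpow_one]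

lemma fB_val {P : Type*} {N : P → ℕ} (hN : ∀ p, 2 ≤ N p) {h : ℕ} (hh : 2 ≤ h) (p : P) :
    fB N h (1 / (h : ℝ)) p = ((N p : ℝ) - (N p : ℝ) ^ (1 / (h : ℝ))) /
    ((N p : ℝ) ^ 2 * ((N p : ℝ) ^ (1 / (h : ℝ)) - 1)) := by
  obtain ⟨ha, haq⟩ := aroot hN hh p
  have hp := Np_pos hN p
  set a := (N p : ℝ) ^ (1 / (h : ℝ)) with hadef
  have e : fB N h (1 / (h : ℝ)) p = ∑ j ∈ Finset.Ico (h + 1) (2 * h), (a⁻¹) ^ j := by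
    unfold fB
    have : Finset.Icc (h + 1) (2 * h - 1) = Finset.Ico (h + 1) (2 * h) := by
      ext j; simp only [Finset.mem_Icc, Finset.mem_Ico]; omega
    rw [this]
    refine Finset.sum_congr rfl fun j _ => ?_
    rw [Real.rpow_neg (by positivity), inv_pow, hadef, ← Real.rpow_natCast, ← Real.rpow_natCast,
      ← Real.rpow_mul hp.le, ← Real.rpow_mul hp.le, mul_comm]
  have ha0 : a ≠ 0 := by positivity
  have ha1 : a - 1 ≠ 0 := by linarith
  rw [e, geom_sum_Ico (by rw [ne_eq, inv_eq_one]; exact ha.ne') (by omega), ← haq]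
  have e1 : a⁻¹ - 1 = -(a - 1) / a := by field_simp; ring
  have e2 : a⁻¹ ^ (2 * h) = 1 / (a ^ h) ^ 2 := by rw [inv_pow, mul_comm, pow_mul, one_div]
  have e3 : a⁻¹ ^ (h + 1) = 1 / (a ^ h * a) := by rw [inv_pow, pow_succ, one_div]
  rw [e1, e2, e3]
  have : a ^ h ≠ 0 := by positivity
  generalize a ^ h = q at *
  have : -(a - 1) ≠ 0 := neg_ne_zero.2 ha1
  field_simp
  ring

lemma gammah_eq {P : Type*} {N : P → ℕ} (hN : ∀ p, 2 ≤ N p) {h : ℕ} (hh : 2 ≤ h) :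
    ZB N h (1 / (h : ℝ)) = gammah N h := by
  unfold ZB gammah
  congr 1; ext p; rw [fB_val hN hh p]

def DD {P : Type*} (N : P → ℕ) (h : ℕ) (p : P) : ℝ :=
  (N p : ℝ) - (N p : ℝ) ^ (1 - 1 / (h : ℝ)) + 1

lemma qa {P : Type*} {N : P → ℕ} (hN : ∀ p, 2 ≤ N p) {h : ℕ} (p : P) :
    (N p : ℝ) ^ (1 - 1 / (h : ℝ)) = N p / (N p : ℝ) ^ (1 / (h : ℝ)) := by
  rw [Real.rpow_sub (Np_pos hN p), Real.rpow_one]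

lemma DD_lb {P : Type*} {N : P → ℕ} (hN : ∀ p, 2 ≤ N p) {h : ℕ} (hh : 2 ≤ h) :
    ∃ c > 0, ∀ p : P, c * N p ≤ DD N h p := by
  have hh0 : (0 : ℝ) < h := by positivity
  refine ⟨1 - (2 : ℝ) ^ (-(1 / (h : ℝ))), ?_, fun p => ?_⟩
  · have : (2 : ℝ) ^ (-(1 / (h : ℝ))) < 1 :=
      Real.rpow_lt_one_of_one_lt_of_neg (by norm_num) (by have : 0 < 1 / (h : ℝ) := by positivity
                                                          linarith)
    linarith
  · have hp := Np_pos hN p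
    have hp2 := Np_two hN p
    unfold DD
    have e : (N p : ℝ) ^ (1 - 1 / (h : ℝ)) = N p * (N p : ℝ) ^ (-(1 / (h : ℝ))) := by
      rw [sub_eq_add_neg, Real.rpow_add hp, Real.rpow_one]
    have : (N p : ℝ) ^ (-(1 / (h : ℝ))) ≤ (2 : ℝ) ^ (-(1 / (h : ℝ))) :=
      Real.rpow_le_rpow_of_nonpos (by norm_num) hp2 (by have : 0 < 1 / (h : ℝ) := by positivity
                                                        linarith)
    rw [e]
    nlinarith

lemma DD_pos {P : Type*} {N : P → ℕ} (hN : ∀ p, 2 ≤ N p) {h : ℕ} (hh : 2 ≤ h) (p : P) :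
    0 < DD N h p := by
  obtain ⟨c, hc, hd⟩ := DD_lb hN hh
  exact lt_of_lt_of_le (mul_pos hc (Np_pos hN p)) (hd p)

lemma c_val {P : Type*} {N : P → ℕ} (hN : ∀ p, 2 ≤ N p) {κ θ : ℝ} (hstar : StarCond N κ θ)
    {h : ℕ} (hh : 2 ≤ h) (p : P) :
    ZB N h (1 / (h : ℝ)) - (1 - (1 / (N p : ℝ)) ^ (1 : ℝ)) * ZBp N h (1 / (h : ℝ)) p
      = gammah N h * (1 / DD N h p) := by
  have hh0 : (0 : ℝ) < h := by positivity
  have hs1 : 1 < ((h : ℝ) + 1) * (1 / (h : ℝ)) := by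
    rw [mul_one_div, lt_div_iff₀ hh0]; linarith
  have h1 := ZB_split hN hstar hh (by positivity) hs1 p
  have hf := fB_nonneg (N := N) (h := h) (s := 1 / (h : ℝ)) p
  have hd := DD_pos hN hh p
  have h2 : ZBp N h (1 / (h : ℝ)) p = gammah N h / (1 + fB N h (1 / (h : ℝ)) p) := by
    rw [eq_div_iff (by positivity), ← gammah_eq hN hh, h1]; ring
  rw [h2, gammah_eq hN hh, Real.rpow_one]
  have key : 1 - (1 - 1 / (N p : ℝ)) / (1 + fB N h (1 / (h : ℝ)) p) = 1 / DD N h p := by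
    have hf' : 1 + fB N h (1 / (h : ℝ)) p ≠ 0 := by positivity
    obtain ⟨ha, haq⟩ := aroot hN hh p
    have hp := Np_pos hN p
    have hp2 := Np_two hN p
    have hD : DD N h p = N p - N p / (N p : ℝ) ^ (1 / (h : ℝ)) + 1 := by unfold DD; rw [qa hN]
    rw [hD] at hd ⊢
    rw [fB_val hN hh p] at hf' ⊢
    generalize (N p : ℝ) ^ (1 / (h : ℝ)) = a at *
    generalize (N p : ℝ) = q at *
    have ha0 : a ≠ 0 := by positivity
    have hq0 : q ≠ 0 := by positivity
    have ha1 : a - 1 ≠ 0 := by linarith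
    have hq1 : q - 1 ≠ 0 := by linarith
    have hm : 0 < q * (a - 1) + a := by nlinarith
    have g1 : 1 + (q - a) / (q ^ 2 * (a - 1)) = (q - 1) * (q * (a - 1) + a) / (q ^ 2 * (a - 1)) := by
      field_simp; ring
    have g2 : q - q / a + 1 = (q * (a - 1) + a) / a := by field_simp
    rw [g1, g2]
    have := hm.ne'
    generalize hM : q * (a - 1) + a = M at *
    field_simp
    linear_combination -hM
  rw [← key]; ring

lemma main_sum {P : Type*} {N : P → ℕ} (hN : ∀ p, 2 ≤ N p) {κ θ : ℝ} (hstar : StarCond N κ θ)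
    {A : ℝ} (hA : IsMertens N A) {h : ℕ} (hh : 2 ≤ h) :
    ∃ K ≥ 0, ∀ y ≥ (2 : ℝ), |∑ p ∈ PF N y, 1 / DD N h p - Real.log (Real.log y) -
      (A + LhSum N h ((h : ℝ) + 1) - LhSum N h (2 * (h : ℝ)))| ≤ K / Real.log y := by
  have hf := HFin_of_star hstar
  have hh0 : (0 : ℝ) < h := by positivity
  obtain ⟨K1, hK1, hm⟩ := mertens2 hN hstar hA
  obtain ⟨c, hc, hd⟩ := DD_lb hN hh
  set δ : ℝ := 1 / (2 * (h : ℝ)) with hδ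
  have hδ0 : 0 < δ := by positivity
  have h2δ : 1 / (h : ℝ) = 2 * δ := by rw [hδ]; field_simp
  -- terms
  set u1 : P → ℝ := fun p => 1 / ((N p : ℝ) ^ ((((h : ℝ) + 1)) / (h : ℝ) - 1) * DD N h p) with hu1
  set u2 : P → ℝ := fun p => 1 / ((N p : ℝ) ^ ((2 * (h : ℝ)) / (h : ℝ) - 1) * DD N h p) with hu2
  have e1 : ∀ p, u1 p = 1 / ((N p : ℝ) ^ (2 * δ) * DD N h p) := by
    intro p; rw [hu1]; dsimp only; congr 3; rw [← h2δ]; field_simp; ring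
  have e2 : ∀ p, u2 p = 1 / ((N p : ℝ) * DD N h p) := by
    intro p; rw [hu2]; dsimp only; congr 2
    have : (2 * (h : ℝ)) / (h : ℝ) - 1 = 1 := by field_simp; norm_num
    rw [this, Real.rpow_one]
  have b1 : ∀ p, u1 p ≤ c⁻¹ * (N p : ℝ) ^ (-(1 + 2 * δ)) := by
    intro p
    have hp := Np_pos hN p
    rw [e1, Real.rpow_neg hp.le, ← mul_inv, Real.rpow_add hp, Real.rpow_one, one_div]
    apply inv_anti₀ (by positivity)
    calc c * (N p * (N p : ℝ) ^ (2 * δ)) = (N p : ℝ) ^ (2 * δ) * (c * N p) := by ring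
      _ ≤ _ := by gcongr; exact hd p
  have b2 : ∀ p, u2 p ≤ c⁻¹ * (N p : ℝ) ^ (-(2 : ℝ)) := by
    intro p
    have hp := Np_pos hN p
    rw [e2, Real.rpow_neg hp.le, ← mul_inv, one_div]
    apply inv_anti₀ (by positivity)
    calc c * (N p : ℝ) ^ (2 : ℝ) = (N p : ℝ) * (c * N p) := by
          rw [show (2 : ℝ) = ((2 : ℕ) : ℝ) by norm_num, Real.rpow_natCast]; ring
      _ ≤ _ := by gcongr; exact hd p
  have n1 : ∀ p, 0 ≤ u1 p := fun p => by
    have := DD_pos hN hh p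
    simp only [hu1]; positivity
  have n2 : ∀ p, 0 ≤ u2 p := fun p => by
    have := DD_pos hN hh p
    simp only [hu2]; positivity
  have s1 : Summable u1 := Summable.of_nonneg_of_le n1 b1
    ((summable_P hN hstar (by linarith)).mul_left _)
  have s2 : Summable u2 := Summable.of_nonneg_of_le n2 b2
    ((summable_P hN hstar (by norm_num)).mul_left _)
  have t1 : LhSum N h ((h : ℝ) + 1) = ∑' p, u1 p := rfl
  have t2 : LhSum N h (2 * (h : ℝ)) = ∑' p, u2 p := rfl
  set u : P → ℝ := fun p => u1 p - u2 p with hu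
  have su : Summable u := s1.sub s2
  have tu : ∑' p, u p = LhSum N h ((h : ℝ) + 1) - LhSum N h (2 * (h : ℝ)) := by
    rw [t1, t2]; exact s1.tsum_sub s2
  have eu : ∀ p, 1 / DD N h p = 1 / (N p : ℝ) + u p := by
    intro p
    have hp := Np_pos hN p
    have hD := DD_pos hN hh p
    have hD' : DD N h p = N p - N p / (N p : ℝ) ^ (2 * δ) + 1 := by unfold DD; rw [qa hN, h2δ]
    rw [hu]; dsimp only; rw [e1, e2]
    have ha : (0 : ℝ) < (N p : ℝ) ^ (2 * δ) := by positivity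
    generalize (N p : ℝ) ^ (2 * δ) = a at *
    generalize DD N h p = D at *
    generalize (N p : ℝ) = q at *
    have : a * D = q * a - q + a := by rw [hD']; field_simp
    field_simp
    linear_combination -this
  have nu : ∀ p, 0 ≤ u p := by
    intro p
    have hp := Np_pos hN p
    have hp2 := Np_two hN p
    have hD := DD_pos hN hh p
    rw [hu]; dsimp only; rw [e1, e2, sub_nonneg]
    apply one_div_le_one_div_of_le (by positivity)
    gcongr
    calc (N p : ℝ) ^ (2 * δ) ≤ (N p : ℝ) ^ (1 : ℝ) := by
          apply Real.rpow_le_rpow_of_exponent_le (by linarith)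
          rw [← h2δ, div_le_one hh0]; exact_mod_cast (by omega : 1 ≤ h)
      _ = _ := Real.rpow_one _
  have sδ := summable_P hN hstar (s := 1 + δ) (by linarith)
  set W : ℝ := c⁻¹ * ∑' p, (N p : ℝ) ^ (-(1 + δ)) with hW
  have hW0 : 0 ≤ W := by
    have : 0 ≤ ∑' p, (N p : ℝ) ^ (-(1 + δ)) := tsum_nonneg fun p => by positivity
    positivity
  have tail : ∀ y ≥ (2 : ℝ), |∑' p, u p - ∑ p ∈ PF N y, u p| ≤ W * y ^ (-δ) := by
    intro y hy
    have hy0 : 0 < y := by linarith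
    have hs : HasSum (fun p => if p ∈ PF N y then u p else 0) (∑ p ∈ PF N y, u p) := by
      have : HasSum (fun p => if p ∈ PF N y then u p else 0)
          (∑ p ∈ PF N y, if p ∈ PF N y then u p else 0) :=
        hasSum_sum_of_ne_finset_zero (fun p hp => by simp [hp])
      rwa [Finset.sum_congr rfl (fun p hp => if_pos hp)] at this
    have hsub := su.hasSum.sub hs
    have hnn : 0 ≤ ∑' p, u p - ∑ p ∈ PF N y, u p :=
      hsub.nonneg fun p => by split_ifs <;> simp [nu p]
    rw [abs_of_nonneg hnn]
    have hr : HasSum (fun p => c⁻¹ * y ^ (-δ) * (N p : ℝ) ^ (-(1 + δ))) (W * y ^ (-δ)) := by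
      have := sδ.hasSum.mul_left (c⁻¹ * y ^ (-δ))
      have e : c⁻¹ * y ^ (-δ) * ∑' p, (N p : ℝ) ^ (-(1 + δ)) = W * y ^ (-δ) := by rw [hW]; ring
      rwa [e] at this
    refine hasSum_le (fun p => ?_) hsub hr
    have hp := Np_pos hN p
    by_cases hpy : p ∈ PF N y
    · simp only [hpy, if_true, sub_self]; positivity
    · simp only [hpy, if_false, sub_zero]
      have hpy' : y < N p := by
        rw [mem_PF hf] at hpy; exact lt_of_not_ge hpy
      calc u p ≤ u1 p := by rw [hu]; dsimp only; linarith [n2 p]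
        _ ≤ _ := b1 p
        _ = c⁻¹ * (N p : ℝ) ^ (-δ) * (N p : ℝ) ^ (-(1 + δ)) := by
            rw [mul_assoc, ← Real.rpow_add hp]; congr 2; ring
        _ ≤ _ := by
            gcongr ?_ * ?_ * _
            exact Real.rpow_le_rpow_of_nonpos hy0 hpy'.le (by linarith)
  refine ⟨K1 + W / δ, by positivity, fun y hy => ?_⟩
  have hy0 : 0 < y := by linarith
  have hly : 0 < Real.log y := Real.log_pos (by linarith)
  have e : ∑ p ∈ PF N y, 1 / DD N h p = ∑ p ∈ PF N y, 1 / (N p : ℝ) + ∑ p ∈ PF N y, u p := by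
    rw [← Finset.sum_add_distrib]; exact Finset.sum_congr rfl fun p _ => eu p
  have ee : ∑ p ∈ PF N y, 1 / DD N h p - Real.log (Real.log y) -
      (A + LhSum N h ((h : ℝ) + 1) - LhSum N h (2 * (h : ℝ))) =
      (∑ p ∈ PF N y, 1 / (N p : ℝ) - Real.log (Real.log y) - A) -
        (∑' p, u p - ∑ p ∈ PF N y, u p) := by rw [e, tu]; ring
  rw [ee]
  have hyd : y ^ (-δ) ≤ 1 / δ / Real.log y := by
    have := Real.log_le_rpow_div hy0.le hδ0
    rw [Real.rpow_neg hy0.le, div_div, one_div]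
    apply inv_anti₀ (by positivity)
    rw [le_div_iff₀ hδ0] at this
    linarith
  calc _ ≤ |∑ p ∈ PF N y, 1 / (N p : ℝ) - Real.log (Real.log y) - A| +
        |∑' p, u p - ∑ p ∈ PF N y, u p| := abs_sub _ _
    _ ≤ K1 / Real.log y + W * (1 / δ / Real.log y) := by
        refine add_le_add (hm y hy) ((tail y hy).trans ?_)
        gcongr
    _ = _ := by ring

end PartP6

lemma pt_inj {h a a' b b' : ℕ} (hh : 2 ≤ h) (hb : b = 0 ∨ (h + 1 ≤ b ∧ b ≤ 2 * h - 1))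
    (hb' : b' = 0 ∨ (h + 1 ≤ b' ∧ b' ≤ 2 * h - 1)) (he : h * a + b = h * a' + b') :
    a = a' ∧ b = b' := by
  have key : ∀ {b : ℕ}, (b = 0 ∨ (h + 1 ≤ b ∧ b ≤ 2 * h - 1)) → b = if b % h = 0 then 0 else h + b % h := by
    intro b hb
    rcases hb with rfl | hb
    · simp
    · have : b % h = b - h := by
        rw [Nat.mod_eq_sub_mod (by omega), Nat.mod_eq_of_lt (by omega)]
      rw [this, if_neg (by omega)]; omega
  have hm : b % h = b' % h := by
    have := congrArg (· % h) he
    simpa [Nat.mul_add_mod] using this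
  have hbb : b = b' := by rw [key hb, key hb', hm]
  refine ⟨?_, hbb⟩
  have : h * a = h * a' := by omega
  exact Nat.eq_of_mul_eq_mul_left (by omega) this

def bpt (h k : ℕ) : ℕ := if k % h = 0 then 0 else h + k % h
def apt (h k : ℕ) : ℕ := (k - bpt h k) / h

lemma bpt_mem {h k : ℕ} (hh : 2 ≤ h) : bpt h k = 0 ∨ (h + 1 ≤ bpt h k ∧ bpt h k ≤ 2 * h - 1) := by
  unfold bpt
  have := Nat.mod_lt k (by omega : 0 < h)
  split_ifs
  · simp
  · right; omega

lemma apt_eq {h k : ℕ} (hh : 2 ≤ h) (hk : k = 0 ∨ h ≤ k) : h * apt h k + bpt h k = k := by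
  have hd : h ∣ k - bpt h k ∧ bpt h k ≤ k := by
    unfold bpt
    have e := Nat.div_add_mod k h
    split_ifs with h0
    · exact ⟨by simpa using Nat.dvd_of_mod_eq_zero h0, by omega⟩
    · have hk' : h ≤ k := by
        rcases hk with rfl | hk
        · simp at h0
        · exact hk
      have h1 : 1 ≤ k / h := Nat.div_pos hk' (by omega)
      have h2 : h * 1 ≤ h * (k / h) := Nat.mul_le_mul_left _ h1
      refine ⟨⟨k / h - 1, ?_⟩, by omega⟩
      rw [Nat.mul_sub]; omega
  unfold apt
  rw [Nat.mul_div_cancel' hd.1]; omega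

lemma Nm_smul {P : Type*} {N : P → ℕ} (h : ℕ) (a : P →₀ ℕ) : Nm N (h • a) = Nm N a ^ h := by
  induction h with
  | zero => simp [Nm_zero]
  | succ n ih => rw [succ_nsmul, Nm_add, ih, pow_succ]

def HF {P : Type*} (N : P → ℕ) (h : ℕ) (x : ℝ) : Finset (P →₀ ℕ) := (MF N x).filter (HFull h)

def cp {P : Type*} (N : P → ℕ) (h : ℕ) (x : ℝ) (p : P) : ℝ := ((HF N h x).filter (fun m => m p ≠ 0)).card

lemma root_le {u v x : ℝ} (hu : 0 < u) (hv : 0 < v) (hx : 0 < x) {h : ℕ} (hh : 2 ≤ h) :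
    u ^ h * v ≤ x ↔ u ≤ x ^ (1 / (h : ℝ)) * v ^ (-(1 / (h : ℝ))) := by
  have hh0 : (0 : ℝ) < h := by positivity
  rw [Real.rpow_neg hv.le, ← div_eq_mul_inv, ← Real.div_rpow hx.le hv.le, ← le_div_iff₀ hv,
    one_div, Real.le_rpow_inv_iff_of_pos hu.le (by positivity) hh0, Real.rpow_natCast]

lemma cnt_w {P : Type*} {N : P → ℕ} (hN : ∀ p, 2 ≤ N p) (hf : HFin N) (z : ℝ) (p : P) (b : P →₀ ℕ) :
    (((MF N z).filter (fun a => a p ≠ 0 ∨ b p ≠ 0)).card : ℝ) = cnt N (z * wB N p b) := by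
  by_cases hb : b p = 0
  · have := shift_sum hN hf (Finsupp.single p 1) z (fun _ => (1 : ℝ))
    simp only [Finset.sum_const, nsmul_eq_mul, mul_one] at this
    unfold wB cnt
    rw [if_pos hb, mul_one_div]
    rw [Nm_single, pow_one] at this
    rw [this]
    congr 2
    ext a
    simp only [Finset.mem_filter, hb, single_le_iff']
    simp [Nat.one_le_iff_ne_zero]
  · unfold wB cnt
    simp [hb]

lemma cp_ident {P : Type*} {N : P → ℕ} (hN : ∀ p, 2 ≤ N p) (hf : HFin N) {h : ℕ} (hh : 2 ≤ h)
    {x : ℝ} (hx : 0 < x) (p : P) :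
    cp N h x p = ∑ b ∈ (MF N x).filter (· ∈ BB h),
      cnt N (x ^ (1 / (h : ℝ)) * (Nm N b : ℝ) ^ (-(1 / (h : ℝ))) * wB N p b) := by
  rw [Finset.sum_congr rfl (fun b _ => (cnt_w hN hf _ p b).symm), ← Nat.cast_sum, ← Finset.card_sigma]
  unfold cp
  congr 1
  symm
  refine Finset.card_bij (fun s _ => h • s.2 + s.1) ?_ ?_ ?_
  · rintro ⟨b, a⟩ hs
    simp only [Finset.mem_sigma, Finset.mem_filter, mem_MF hf] at hs
    obtain ⟨⟨hbx, hbB⟩, hax, hp⟩ := hs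
    simp only [HF, Finset.mem_filter, mem_MF hf]
    refine ⟨⟨?_, ?_⟩, ?_⟩
    · rw [Nm_add, Nm_smul]; push_cast
      exact (root_le (Nm_pos' hN a) (Nm_pos' hN b) hx hh).2 hax
    · intro q
      have := mem_BB.1 hbB q
      simp only [Finsupp.add_apply, Finsupp.smul_apply, smul_eq_mul]
      rcases Nat.eq_zero_or_pos (a q) with h0 | h0
      · rw [h0]; omega
      · right
        have : h * 1 ≤ h * a q := Nat.mul_le_mul_left _ h0
        omega
    · simp only [Finsupp.add_apply, Finsupp.smul_apply, smul_eq_mul]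
      intro h0
      rw [Nat.add_eq_zero_iff, Nat.mul_eq_zero] at h0
      rcases hp with hp | hp
      · rcases h0.1 with h1 | h1
        · omega
        · exact hp h1
      · exact hp h0.2
  · rintro ⟨b, a⟩ hs ⟨b', a'⟩ hs' he
    simp only [Finset.mem_sigma, Finset.mem_filter] at hs hs'
    dsimp only at he
    have hq : ∀ q, a q = a' q ∧ b q = b' q := fun q => by
      have e := DFunLike.congr_fun he q
      simp only [Finsupp.add_apply, Finsupp.smul_apply, smul_eq_mul] at e
      exact pt_inj hh (mem_BB.1 hs.1.2 q) (mem_BB.1 hs'.1.2 q) e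
    have e1 : a = a' := Finsupp.ext fun q => (hq q).1
    have e2 : b = b' := Finsupp.ext fun q => (hq q).2
    rw [e1, e2]
  · intro m hm
    simp only [HF, Finset.mem_filter, mem_MF hf] at hm
    obtain ⟨⟨hmx, hmf⟩, hmp⟩ := hm
    set b : P →₀ ℕ := m.mapRange (bpt h) (by simp [bpt]) with hb
    set a : P →₀ ℕ := m.mapRange (apt h) (by simp [apt]) with ha
    have e : h • a + b = m := by
      ext q
      simp only [Finsupp.add_apply, Finsupp.smul_apply, smul_eq_mul, ha, hb, Finsupp.mapRange_apply]
      exact apt_eq hh (hmf q)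
    have hn : (Nm N a : ℝ) ^ h * Nm N b ≤ x := by
      rw [← e, Nm_add, Nm_smul] at hmx; push_cast at hmx; exact hmx
    refine ⟨⟨b, a⟩, ?_, e⟩
    simp only [Finset.mem_sigma, Finset.mem_filter, mem_MF hf]
    refine ⟨⟨?_, ?_⟩, ?_, ?_⟩
    · refine le_trans ?_ hn
      have h1 : (1 : ℝ) ≤ (Nm N a : ℝ) := by exact_mod_cast Nm_pos hN a
      have h2 := one_le_pow₀ h1 (n := h)
      have h3 := Nm_pos' hN b
      nlinarith
    · rw [mem_BB]; intro q
      rw [hb, Finsupp.mapRange_apply]; exact bpt_mem hh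
    · exact (root_le (Nm_pos' hN a) (Nm_pos' hN b) hx hh).1 hn
    · by_contra hc
      push Not at hc
      apply hmp
      rw [← e]
      simp [hc.1, hc.2]

lemma omega_sum {P : Type*} {N : P → ℕ} (hN : ∀ p, 2 ≤ N p) (hf : HFin N) {h : ℕ} (hh : 2 ≤ h)
    {x : ℝ} (hx : 0 < x) :
    (∑ᶠ m ∈ {m : P →₀ ℕ | HFull h m ∧ (Nm N m : ℝ) ≤ x}, (omegaM m : ℝ)) =
      ∑ p ∈ PF N (x ^ (1 / (h : ℝ))), cp N h x p := by
  have hh0 : (0 : ℝ) < h := by positivity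
  have hset : {m : P →₀ ℕ | HFull h m ∧ (Nm N m : ℝ) ≤ x} = ((HF N h x : Finset _) : Set (P →₀ ℕ)) := by
    ext m
    simp [HF, mem_MF hf, and_comm]
  rw [hset, finsum_mem_coe_finset]
  have e1 : ∀ m ∈ HF N h x, (omegaM m : ℝ) =
      ∑ p ∈ PF N (x ^ (1 / (h : ℝ))), if m p ≠ 0 then (1 : ℝ) else 0 := by
    intro m hm
    simp only [HF, Finset.mem_filter, mem_MF hf] at hm
    rw [Finset.sum_boole]
    unfold omegaM
    congr 2
    ext p
    rw [Finset.mem_filter, Finsupp.mem_support_iff, mem_PF hf]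
    refine ⟨fun hp => ⟨?_, hp⟩, fun hp => hp.2⟩
    have hle : h ≤ m p := by
      rcases hm.2 p with h0 | h0
      · exact absurd h0 hp
      · exact h0
    have h1 : Finsupp.single p h ≤ m := (single_le_iff' p h m).2 hle
    have h2 := Nm_mono hN h1
    rw [Nm_single] at h2
    have h3 : ((N p : ℝ)) ^ h ≤ x := le_trans (by exact_mod_cast h2) hm.1
    rw [one_div, Real.le_rpow_inv_iff_of_pos (Np_pos hN p).le hx.le hh0, Real.rpow_natCast]
    exact h3
  rw [Finset.sum_congr rfl e1, Finset.sum_comm]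
  refine Finset.sum_congr rfl fun p _ => ?_
  rw [Finset.sum_boole]
  rfl

lemma cp_est {P : Type*} {N : P → ℕ} (hN : ∀ p, 2 ≤ N p) {κ θ : ℝ} (hstar : StarCond N κ θ)
    {h : ℕ} (hh : 2 ≤ h) {α : ℝ} (hα : θ ≤ α) (hα1 : α < 1) (hαh : 1 < ((h : ℝ) + 1) * (α / h)) :
    ∃ C ≥ 0, ∀ x > 0, ∀ p, |cp N h x p - κ * gammah N h * (x ^ (1 / (h : ℝ)) * (1 / DD N h p))| ≤
      C * ((x ^ (1 / (h : ℝ))) ^ α * (N p : ℝ) ^ (-α)) := by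
  have hf := HFin_of_star hstar
  have hh0 : (0 : ℝ) < h := by positivity
  have hα0 : 0 ≤ α := hstar.2.1.trans hα
  obtain ⟨C, hC, hcb⟩ := cnt_bound hN hstar hα hα1
  have hZ : 0 ≤ ZB N h (α / h) :=
    (ZB_hasSum hN hstar hh (by positivity) hαh).nonneg (fun b => by split_ifs <;> positivity)
  refine ⟨C * (h * ZB N h (α / h)), by positivity, fun x hx p => ?_⟩
  have hp := Np_pos hN p
  set y := x ^ (1 / (h : ℝ)) with hy
  have hy0 : 0 < y := by positivity
  have hs1 : 1 < ((h : ℝ) + 1) * (1 / (h : ℝ)) := by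
    rw [mul_one_div, lt_div_iff₀ hh0]; linarith
  set z : (P →₀ ℕ) → ℝ := fun b => y * (Nm N b : ℝ) ^ (-(1 / (h : ℝ))) * wB N p b with hz
  have hw0 : ∀ b, 0 < wB N p b := fun b => by unfold wB; split_ifs <;> positivity
  have hw1 : ∀ b, wB N p b ≤ 1 := fun b => by
    unfold wB; split_ifs
    · rw [div_le_one hp]; linarith [Np_two hN p]
    · exact le_rfl
  have hz0 : ∀ b, 0 < z b := fun b => by
    have := hw0 b
    have := Nm_pos' hN b
    simp only [hz]; positivity
  have H1 : HasSum (fun b => if b ∈ BB h then cnt N (z b) else 0) (cp N h x p) := by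
    rw [cp_ident hN hf hh hx p, Finset.sum_filter]
    apply hasSum_sum_of_ne_finset_zero
    intro b hb
    rw [mem_MF hf, not_le] at hb
    split_ifs
    · apply cnt_zero hN hf
      have h1 := Nm_pos' hN b
      have : y * (Nm N b : ℝ) ^ (-(1 / (h : ℝ))) < 1 := by
        by_contra hc
        rw [not_lt] at hc
        have := (root_le one_pos h1 hx hh).2 hc
        rw [one_pow, one_mul] at this
        linarith
      have h2 : 0 < y * (Nm N b : ℝ) ^ (-(1 / (h : ℝ))) := by positivity
      simp only [hz]
      calc _ ≤ y * (Nm N b : ℝ) ^ (-(1 / (h : ℝ))) * 1 := by gcongr; exact hw1 b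
        _ < 1 := by linarith
    · rfl
  have H2 := (w_hasSum hN hstar hh (by positivity) hs1 p 1).mul_left (κ * y)
  rw [c_val hN hstar hh p] at H2
  have H3 := (w_hasSum hN hstar hh (by positivity) hαh p α).mul_left (C * y ^ α)
  have H4 := H1.sub H2
  have bd : ∀ b, |(if b ∈ BB h then cnt N (z b) else 0) - κ * y *
      (if b ∈ BB h then wB N p b ^ (1 : ℝ) * (Nm N b : ℝ) ^ (-(1 / (h : ℝ))) else 0)| ≤
      C * y ^ α * (if b ∈ BB h then wB N p b ^ α * (Nm N b : ℝ) ^ (-(α / (h : ℝ))) else 0) := by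
    intro b
    have h1 := Nm_pos' hN b
    split_ifs
    · have e1 : κ * y * (wB N p b ^ (1 : ℝ) * (Nm N b : ℝ) ^ (-(1 / (h : ℝ)))) = κ * z b := by
        rw [Real.rpow_one]; simp only [hz]; ring
      have e2 : C * y ^ α * (wB N p b ^ α * (Nm N b : ℝ) ^ (-(α / (h : ℝ)))) = C * z b ^ α := by
        simp only [hz]
        rw [Real.mul_rpow (by positivity) (hw0 b).le, Real.mul_rpow hy0.le (by positivity),
          ← Real.rpow_mul h1.le]
        rw [show -(1 / (h : ℝ)) * α = -(α / h) by ring]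
        ring
      rw [e1, e2]
      exact hcb _ (hz0 b)
    · simp
  have hle : |cp N h x p - κ * y * (gammah N h * (1 / DD N h p))| ≤
      C * y ^ α * (ZB N h (α / h) - (1 - (1 / (N p : ℝ)) ^ α) * ZBp N h (α / h) p) := by
    rw [abs_le]
    constructor
    · refine hasSum_le (fun b => ?_) H3.neg H4
      exact (abs_le.1 (bd b)).1
    · refine hasSum_le (fun b => ?_) H4 H3
      exact (abs_le.1 (bd b)).2
  have e : κ * gammah N h * (y * (1 / DD N h p)) = κ * y * (gammah N h * (1 / DD N h p)) := by ring
  rw [e]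
  refine hle.trans ?_
  calc _ ≤ C * y ^ α * (h * ZB N h (α / h) * (N p : ℝ) ^ (-α)) := by
        gcongr; exact w_bound hN hstar hh hα0 hαh p
    _ = _ := by ring

/-- First moment of `ω` over `h`-full elements. -/
theorem first_moment_omega_hfull {P : Type*} [Countable P] (N : P → ℕ)
    (hN : ∀ p, 2 ≤ N p) (κ θ : ℝ) (hstar : StarCond N κ θ)
    (A : ℝ) (hA : IsMertens N A) (h : ℕ) (hh : 2 ≤ h) :
    (fun x : ℝ =>
        (∑ᶠ m ∈ {m : P →₀ ℕ | HFull h m ∧ (Nm N m : ℝ) ≤ x}, (omegaM m : ℝ))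
          - κ * gammah N h * (x ^ (1 / (h : ℝ)) * Real.log (Real.log x))
          - κ * gammah N h * D1const N h A * x ^ (1 / (h : ℝ)))
      =O[atTop] fun x : ℝ => x ^ (1 / (h : ℝ)) / Real.log x := by
  have hf := HFin_of_star hstar
  have hh0 : (0 : ℝ) < h := by positivity
  have hhh : (h : ℝ) / (h + 1) < 1 := by rw [div_lt_one (by positivity)]; linarith
  obtain ⟨α, hα, hα1⟩ := exists_between (max_lt hstar.2.2.1 hhh)
  have hαθ : θ ≤ α := (le_max_left _ _).trans hα.le
  have hα0 : 0 ≤ α := hstar.2.1.trans hαθ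
  have hαh : 1 < ((h : ℝ) + 1) * (α / h) := by
    have := lt_of_le_of_lt (le_max_right _ _) hα
    rw [div_lt_iff₀ (by positivity)] at this
    rw [← mul_div_assoc, lt_div_iff₀ hh0]; linarith
  obtain ⟨C, hC, hcp⟩ := cp_est hN hstar hh hαθ hα1 hαh
  obtain ⟨C2, hC2, hpp⟩ := prime_pow_sum hN hstar hα0 hα1
  obtain ⟨K, hK, hms⟩ := main_sum hN hstar hA hh
  set G := κ * gammah N h with hG
  refine IsBigO.of_bound ((C * C2 + |G| * K) * h) ?_
  filter_upwards [eventually_ge_atTop ((2 : ℝ) ^ h)] with x hx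
  have hx2 : (1 : ℝ) < x := lt_of_lt_of_le (one_lt_pow₀ (by norm_num) (by omega)) hx
  have hx0 : 0 < x := by linarith
  have hlx : 0 < Real.log x := Real.log_pos hx2
  have hom := omega_sum hN hf hh hx0
  simp only [Set.mem_setOf_eq] at hom
  rw [hom]
  have hly' : Real.log (x ^ (1 / (h : ℝ))) = Real.log x / h := by
    rw [Real.log_rpow hx0]; ring
  have hy2 : 2 ≤ x ^ (1 / (h : ℝ)) := by
    rw [one_div, Real.le_rpow_inv_iff_of_pos (by norm_num) hx0.le hh0, Real.rpow_natCast]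
    exact hx
  have hcpx := hcp x hx0
  set y := x ^ (1 / (h : ℝ)) with hy
  have hy0 : 0 < y := by linarith
  have hly : 0 < Real.log y := Real.log_pos (by linarith)
  have hll : Real.log (Real.log y) = Real.log (Real.log x) - Real.log h := by
    rw [hly', Real.log_div hlx.ne' hh0.ne']
  have E1 : |∑ p ∈ PF N y, cp N h x p - G * y * ∑ p ∈ PF N y, 1 / DD N h p| ≤
      C * C2 * (y / Real.log y) := by
    rw [Finset.mul_sum, ← Finset.sum_sub_distrib]
    refine (Finset.abs_sum_le_sum_abs _ _).trans ?_
    calc _ ≤ ∑ p ∈ PF N y, C * (y ^ α * (N p : ℝ) ^ (-α)) := by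
          refine Finset.sum_le_sum fun p _ => ?_
          have := hcpx p
          rwa [← mul_assoc] at this
      _ = C * y ^ α * ∑ p ∈ PF N y, (N p : ℝ) ^ (-α) := by
          rw [Finset.mul_sum]; exact Finset.sum_congr rfl fun p _ => by ring
      _ ≤ C * y ^ α * (C2 * (y ^ (1 - α) / Real.log y)) := by
          gcongr; exact hpp y (by linarith)
      _ = C * C2 * ((y ^ α * y ^ (1 - α)) / Real.log y) := by ring
      _ = _ := by rw [← Real.rpow_add hy0, add_sub_cancel, Real.rpow_one]
  have E2 := hms y hy2
  have E3 : |G * y * (∑ p ∈ PF N y, 1 / DD N h p - Real.log (Real.log y) -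
      (A + LhSum N h ((h : ℝ) + 1) - LhSum N h (2 * (h : ℝ))))| ≤ |G| * K * (y / Real.log y) := by
    rw [abs_mul, abs_mul, abs_of_pos hy0]
    calc _ ≤ |G| * y * (K / Real.log y) := by gcongr
      _ = _ := by ring
  have ee : ∑ p ∈ PF N y, cp N h x p - G * (y * Real.log (Real.log x)) - G * D1const N h A * y =
      (∑ p ∈ PF N y, cp N h x p - G * y * ∑ p ∈ PF N y, 1 / DD N h p) +
      G * y * (∑ p ∈ PF N y, 1 / DD N h p - Real.log (Real.log y) -
      (A + LhSum N h ((h : ℝ) + 1) - LhSum N h (2 * (h : ℝ)))) := by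
    rw [hll]; unfold D1const; ring
  rw [ee, Real.norm_eq_abs, Real.norm_eq_abs, abs_of_pos (div_pos hy0 hlx)]
  refine (abs_add_le _ _).trans ((add_le_add E1 E3).trans (le_of_eq ?_))
  rw [hly']
  field_simp
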